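/- (Conjugation symmetry of q-Littlewood–Richardson coefficients; core of the ribbon involution theorem.) Fix n ≥ 1 and a skew shape λ/μ tileable by n-ribbons, with m = |λ/μ|/n ribbons. Then for every partition ν of m, the q-Littlewood–Richardson coefficients satisfy c^{ν'}_{λ'/μ'}(q) = q^{(n−1)m} · c^{ν}_{λ/μ}(q^{−1}) as an identity in ℤ[q,q^{−1}], where ν', λ', μ' denote conjugate partitions. -/

import Mathlib

/-!
Call the largest content of a cell of a ribbon its head content. A horizontal `n`-ribbon strip is
the same thing as a sequence of ribbon additions with strictly increasing head contents
(`hstrip_of_path`, `path_of_hstrip`). A semistandard ribbon tableau of weight `α` is therefore the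
same as a standard one, i.e. a sequence of single ribbon additions (`RPath`), whose head contents
increase inside each of the consecutive blocks of sizes `α₁, α₂, …`. So the coefficient of `x^α` in
a ribbon function is the spin generating function of the standard ribbon tableaux with ascents at
prescribed places (`coeff_ribbonFn`), and as `N ≥ m`, every set of places occurs
(`exists_weight`). Inclusion-exclusion upgrades the Schur expansion to an identity between spin
generating functions with prescribed ascents and prescribed descents (`gen_expansion`), where the
Schur polynomials contribute the standard Young tableaux (`n = 1`).

Two ribbons added in succession never have the same head content (`hd_ne`), and transposition
negates contents, so transposing a standard ribbon tableau exchanges ascents and descents. It also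
replaces the spin `s` of a ribbon by `n - 1 - s`. Hence (`gen_transpose`) prescribing ascents in
`A` for `λ'/μ'` amounts to prescribing descents in `A` for `λ/μ`, with `q` inverted and a factor
`q^{(n-1)m}`. Expanding both sides, and using the same fact for standard Young tableaux, shows that
the families `c^ν_{λ'/μ'}(q)` and `q^{(n-1)m} c^{ν'}_{λ/μ}(q⁻¹)` have the same pairing with the
numbers of standard Young tableaux of shape `ν` with ascents at all places in `A`, for every `A`.

These numbers determine the coefficients (`coeffs_eq_zero`): taking for `A` the places where two
successive letters of the row-by-row filling of `ν` share a row, a standard tableau with ascents on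
`A` has each letter weakly above its position in that filling (`row_le`), so that the system is
triangular with respect to the sum of the row indices of the cells.
-/

open scoped Classical

noncomputable section

/-- A cell of a Young/skew diagram: (row, column). -/
abbrev Cell : Type := ℕ × ℕ

/-- Two cells are adjacent if they share an edge. -/
def Adj (a b : Cell) : Prop :=
  (a.1 = b.1 ∧ (a.2 + 1 = b.2 ∨ b.2 + 1 = a.2)) ∨
  (a.2 = b.2 ∧ (a.1 + 1 = b.1 ∨ b.1 + 1 = a.1))

/-- Reachability inside a finite set of cells via edge-adjacency. -/
def Reach (S : Finset Cell) (a b : Cell) : Prop :=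
  Relation.ReflTransGen (fun x y => y ∈ S ∧ Adj x y) a b

/-- A set of cells is connected if any two of its cells are joined by a path inside it. -/
def CellsConnected (S : Finset Cell) : Prop :=
  ∀ a ∈ S, ∀ b ∈ S, Reach S a b

/-- The connected component of the cell `c` inside `S`. -/
def component (S : Finset Cell) (c : Cell) : Finset Cell :=
  S.filter (fun d => Reach S c d)

/-- The number of connected components of a set of cells. -/
def numComponents (S : Finset Cell) : ℕ :=
  (S.image (fun c => component S c)).card

/-- `S` contains no 2 × 2 square of cells. -/
def NoSquare (S : Finset Cell) : Prop :=
  ¬ ∃ i j : ℕ, (i, j) ∈ S ∧ (i + 1, j) ∈ S ∧ (i, j + 1) ∈ S ∧ (i + 1, j + 1) ∈ S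

/-- `S` is (the set of cells of) a skew shape `λ/μ`. -/
def IsSkewCells (S : Finset Cell) : Prop :=
  ∃ lam mu : YoungDiagram, mu ≤ lam ∧ S = lam.cells \ mu.cells

/-- An `n`-ribbon: a connected skew shape with `n` cells and no 2 × 2 square. -/
def IsRibbon (n : ℕ) (S : Finset Cell) : Prop :=
  S.card = n ∧ CellsConnected S ∧ NoSquare S ∧ IsSkewCells S

/-- The spin of a ribbon: the number of rows it occupies, minus 1. -/
def ribbonSpin (S : Finset Cell) : ℕ := (S.image Prod.fst).card - 1

/-- `T` is a tiling of the cell set `S` by `n`-ribbons. -/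
def IsTilingOf (n : ℕ) (S : Finset Cell) (T : Finset (Finset Cell)) : Prop :=
  (∀ R ∈ T, IsRibbon n R) ∧
  ((T : Set (Finset Cell)).Pairwise fun A B => Disjoint A B) ∧
  T.biUnion id = S

/-- `S` can be tiled by `n`-ribbons. -/
def Tileable (n : ℕ) (S : Finset Cell) : Prop := ∃ T, IsTilingOf n S T

/-- Total spin of a tiling. -/
def tilingSpin (T : Finset (Finset Cell)) : ℕ := ∑ R ∈ T, ribbonSpin R

/-- The maximum spin of an `n`-ribbon tiling of `S`. -/
def maxSpin (n : ℕ) (S : Finset Cell) : ℕ :=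
  sSup {m : ℕ | ∃ T, IsTilingOf n S T ∧ tilingSpin T = m}

/-- `c` is the topright-most cell of `R`: maximal column and, among those, minimal row. -/
def TopRightCell (R : Finset Cell) (c : Cell) : Prop :=
  c ∈ R ∧ ∀ d ∈ R, d.2 ≤ c.2 ∧ (d.2 = c.2 → c.1 ≤ d.1)

/-- Every ribbon of the tiling `T` has its topright-most cell touching the northern
edge of the shape `S`: the cell directly above it is not in `S`. -/
def NorthernCond (S : Finset Cell) (T : Finset (Finset Cell)) : Prop :=
  ∀ R ∈ T, ∀ c : Cell, TopRightCell R c → (c.1 = 0 ∨ (c.1 - 1, c.2) ∉ S)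

/-- `T` is a tiling of `S` witnessing that `S` is a horizontal `n`-ribbon strip. -/
def IsHStripTiling (n : ℕ) (S : Finset Cell) (T : Finset (Finset Cell)) : Prop :=
  IsTilingOf n S T ∧ NorthernCond S T

/-- `S` is a horizontal `n`-ribbon strip. -/
def IsHStripCells (n : ℕ) (S : Finset Cell) : Prop :=
  IsSkewCells S ∧ ∃ T, IsHStripTiling n S T

/-- The spin of a horizontal `n`-ribbon strip (via its tiling, which is unique when it exists). -/
def stripSpin (n : ℕ) (S : Finset Cell) : ℕ :=
  if h : ∃ T, IsHStripTiling n S T then tilingSpin h.choose else 0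

/-- Conjugate (transpose) of a set of cells. -/
def swapCells (S : Finset Cell) : Finset Cell := S.image Prod.swap

/-- `S` is a vertical `n`-ribbon strip: its conjugate is a horizontal one. -/
def IsVStripCells (n : ℕ) (S : Finset Cell) : Prop :=
  IsHStripCells n (swapCells S)

/-- The spin of a vertical `n`-ribbon strip with `k = |S|/n` ribbons:
`k (n-1)` minus the spin of the conjugate strip. -/
def vStripSpin (n : ℕ) (S : Finset Cell) : ℕ :=
  (S.card / n) * (n - 1) - stripSpin n (swapCells S)

/-- `T` is a tiling of `S` witnessing that `S` is a vertical `n`-ribbon strip. -/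
def IsVStripTiling (n : ℕ) (S : Finset Cell) (T : Finset (Finset Cell)) : Prop :=
  IsHStripTiling n (swapCells S) (T.image swapCells)

/-- `mu` is obtained from `lam` by removing a single `n`-ribbon. -/
def RibbonStep (n : ℕ) (lam mu : YoungDiagram) : Prop :=
  mu ≤ lam ∧ IsRibbon n (lam.cells \ mu.cells)

/-- `delta` is the `n`-core of `lam`: it is obtained from `lam` by successively removing
`n`-ribbons, and no further `n`-ribbon can be removed from it. -/
def IsNCoreOf (n : ℕ) (delta lam : YoungDiagram) : Prop :=
  Relation.ReflTransGen (RibbonStep n) lam delta ∧ ∀ mu, ¬ RibbonStep n delta mu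

/-- The `n`-core of a partition (defined via choice; it exists and is unique). -/
def nCore (n : ℕ) (lam : YoungDiagram) : YoungDiagram :=
  if h : ∃ d, IsNCoreOf n d lam then h.choose else lam

/-- A semistandard `n`-ribbon tableau of shape `lam/mu` with entries in `{1, …, N}`:
a chain of partitions `mu = μ⁰ ⊆ μ¹ ⊆ ⋯ ⊆ μᴺ = lam` where each `μⁱ/μ^{i-1}` is a (possibly
empty) horizontal `n`-ribbon strip, together with the (unique) tiling of each strip. -/
structure RibbonTableau (n N : ℕ) (lam mu : YoungDiagram) where
  chain : Fin (N + 1) → YoungDiagram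
  chain_zero : chain 0 = mu
  chain_last : chain (Fin.last N) = lam
  chain_mono : ∀ i : Fin N, chain i.castSucc ≤ chain i.succ
  tiling : Fin N → Finset (Finset Cell)
  tiling_strip : ∀ i : Fin N,
    IsHStripTiling n ((chain i.succ).cells \ (chain i.castSucc).cells) (tiling i)

/-- The spin of a ribbon tableau. -/
def RibbonTableau.spin {n N : ℕ} {lam mu : YoungDiagram} (T : RibbonTableau n N lam mu) : ℕ :=
  ∑ i : Fin N, tilingSpin (T.tiling i)

/-- A standard ribbon tableau: each letter occurs exactly once. -/
def RibbonTableau.IsStandard {n N : ℕ} {lam mu : YoungDiagram}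
    (T : RibbonTableau n N lam mu) : Prop :=
  ∀ i : Fin N, (T.tiling i).card = 1

/-- The monomial `q^{spin T} x^{weight T}` attached to a ribbon tableau. -/
def tableauTerm {n N : ℕ} {lam mu : YoungDiagram} (T : RibbonTableau n N lam mu) :
    MvPolynomial (Fin N) (Polynomial ℤ) :=
  MvPolynomial.C (Polynomial.X ^ T.spin) *
    ∏ i : Fin N, MvPolynomial.X i ^ (T.tiling i).card

/-- The ribbon function `𝒢_{lam/mu}(x₁, …, x_N; q)`. -/
def ribbonFn (n N : ℕ) (lam mu : YoungDiagram) : MvPolynomial (Fin N) (Polynomial ℤ) :=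
  ∑ᶠ T : RibbonTableau n N lam mu, tableauTerm T

/-- `𝒢_lam = 𝒢_{lam/(n-core of lam)}`. -/
def G (n N : ℕ) (lam : YoungDiagram) : MvPolynomial (Fin N) (Polynomial ℤ) :=
  ribbonFn n N lam (nCore n lam)

/-- The Schur polynomial `s_ν(x₁,…,x_N)`, realized as the `n = 1` ribbon function
(1-ribbon tableaux are exactly semistandard Young tableaux, and all spins are 0). -/
def schurPoly (N : ℕ) (nu : YoungDiagram) : MvPolynomial (Fin N) (Polynomial ℤ) :=
  ribbonFn 1 N nu ⊥

/-- The cells of the `i`-th horizontal strip of a decomposition. -/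
def stripCells {len : ℕ} (strip : Fin len → Finset (Finset Cell)) (i : Fin len) : Finset Cell :=
  (strip i).biUnion id

/-- The cells of `lam` together with the strips up to (and including) `i`. -/
def partialCells {len : ℕ} (strip : Fin len → Finset (Finset Cell)) (lam : YoungDiagram)
    (i : Fin len) : Finset Cell :=
  lam.cells ∪ (Finset.univ.filter (fun j => j ≤ i)).biUnion (fun j => stripCells strip j)

/-- The union of the cells of the strips strictly before `i`. -/
def prevCells {len : ℕ} (strip : Fin len → Finset (Finset Cell)) (i : Fin len) : Finset Cell :=
  (Finset.univ.filter (fun j => j < i)).biUnion (fun j => stripCells strip j)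

/-- Two cell sets touch if some cell of one is adjacent to some cell of the other. -/
def Touches (A B : Finset Cell) : Prop :=
  ∃ a ∈ A, ∃ b ∈ B, Adj a b

/-- `R` is the rightmost ribbon within the cell set `C`. -/
def IsRightmostIn (R C : Finset Cell) : Prop :=
  ∃ c ∈ R, ∀ d ∈ C, d.2 ≤ c.2

/-- A border `n`-ribbon strip of shape `mu/lam`: the connected skew shape `mu/lam` with a
distinguished decomposition into disjoint non-empty horizontal `n`-ribbon strips
`T₁, …, T_len` (each recorded by its tiling) such that each partial union is a skew shape,
`T₁` is connected, and for `i ≥ 2` every connected component `C` of `Tᵢ` is such that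
`C ∪ (T₁ ∪ ⋯ ∪ T_{i-1})` is not a horizontal `n`-ribbon strip and only the rightmost
ribbon of `C` touches `T₁ ∪ ⋯ ∪ T_{i-1}`. -/
structure BorderRibbonStrip (n : ℕ) (lam mu : YoungDiagram) where
  len : ℕ
  len_pos : 1 ≤ len
  strip : Fin len → Finset (Finset Cell)
  sub : lam ≤ mu
  connected : CellsConnected (mu.cells \ lam.cells)
  nonempty : ∀ i, (strip i).Nonempty
  disj : ∀ i j, i ≠ j → Disjoint (stripCells strip i) (stripCells strip j)
  cover : Finset.univ.biUnion (fun i => stripCells strip i) = mu.cells \ lam.cells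
  shape : ∀ i, ∃ nu : YoungDiagram, nu.cells = partialCells strip lam i
  hstrips : ∀ i, IsHStripTiling n (stripCells strip i) (strip i)
  first_connected : CellsConnected (stripCells strip ⟨0, len_pos⟩)
  comp_cond : ∀ i : Fin len, 0 < (i : ℕ) → ∀ c ∈ stripCells strip i,
    (¬ IsHStripCells n (component (stripCells strip i) c ∪ prevCells strip i)) ∧
    (∀ R ∈ strip i, R ⊆ component (stripCells strip i) c →
      Touches R (prevCells strip i) → IsRightmostIn R (component (stripCells strip i) c))

/-- The height of a border ribbon strip: total number of connected components of its
horizontal strips, minus 1. -/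
def BorderRibbonStrip.height {n : ℕ} {lam mu : YoungDiagram}
    (S : BorderRibbonStrip n lam mu) : ℕ :=
  (∑ i : Fin S.len, numComponents (stripCells S.strip i)) - 1

/-- The spin of a border ribbon strip. -/
def BorderRibbonStrip.spin {n : ℕ} {lam mu : YoungDiagram}
    (S : BorderRibbonStrip n lam mu) : ℕ :=
  ∑ i : Fin S.len, tilingSpin (S.strip i)

/-- The size (number of ribbons) of a border ribbon strip. -/
def BorderRibbonStrip.size {n : ℕ} {lam mu : YoungDiagram}
    (S : BorderRibbonStrip n lam mu) : ℕ :=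
  ∑ i : Fin S.len, (S.strip i).card

/-- `𝒳^{mu/lam}_k(q) = Σ_S (-1)^{h(S)} q^{s(S)}` over border `n`-ribbon strips of shape
`mu/lam` with `k` ribbons. -/
def chiX (n k : ℕ) (lam mu : YoungDiagram) : Polynomial ℤ :=
  ∑ᶠ S : BorderRibbonStrip n lam mu,
    if S.size = k then (-1) ^ S.height * Polynomial.X ^ S.spin else 0

/-- The complete homogeneous symmetric polynomial of degree `k` evaluated at the family `v`. -/
def hPoly {ι R : Type*} [Fintype ι] [DecidableEq ι] [CommSemiring R] (k : ℕ) (v : ι → R) : R :=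
  ∑ d : Sym ι k, ((d : Multiset ι).map v).prod

/-- The elementary symmetric polynomial of degree `k` evaluated at the family `v`. -/
def ePoly {ι R : Type*} [Fintype ι] [DecidableEq ι] [CommSemiring R] (k : ℕ) (v : ι → R) : R :=
  ∑ s ∈ Finset.univ.powersetCard k, ∏ i ∈ s, v i

/-- The alphabet `A_q(x) = {q^{2j} x_i : 1 ≤ i ≤ N, 0 ≤ j ≤ n-1}`. -/
def alphabetVal (n N : ℕ) : Fin N × Fin n → MvPolynomial (Fin N) (Polynomial ℤ) :=
  fun p => MvPolynomial.C (Polynomial.X ^ (2 * (p.2 : ℕ))) * MvPolynomial.X p.1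

/-- The Schur function `s_lam` evaluated at the alphabet `A_q(x)`,
i.e. the plethysm `s_lam[(1+q²+⋯+q^{2n-2})X]` in `N` variables. -/
def schurAlph (n N : ℕ) (lam : YoungDiagram) : MvPolynomial (Fin N) (Polynomial ℤ) :=
  MvPolynomial.aeval
    (fun t : Fin (n * N) => alphabetVal n N (Prod.swap (finProdFinEquiv.symm t)))
    (schurPoly (n * N) lam)

end

namespace QLR

/-! ### Geometry of a single ribbon -/

/-- The content (diagonal index) `column - row` of a cell. -/
def content (x : Cell) : ℤ := (x.2 : ℤ) - (x.1 : ℤ)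

/-- The largest content of a cell of `S`, i.e. the content of the topright-most cell when `S`
is a ribbon (and `0` for the empty set). -/
noncomputable def hd (S : Finset Cell) : ℤ :=
  if h : S.Nonempty then (S.image content).max' (h.image _) else 0

lemma content_le_hd {S : Finset Cell} {x : Cell} (hx : x ∈ S) : content x ≤ hd S := by
  have h : S.Nonempty := ⟨x, hx⟩
  rw [hd, dif_pos h]
  exact Finset.le_max' _ _ (Finset.mem_image_of_mem _ hx)

lemma exists_content_eq_hd {S : Finset Cell} (h : S.Nonempty) : ∃ x ∈ S, content x = hd S := by
  rw [hd, dif_pos h]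
  exact Finset.mem_image.1 (Finset.max'_mem _ (h.image content))

/-- Skew shapes are order-convex. -/
lemma skew_convex {S : Finset Cell} (hS : IsSkewCells S) {a b x : Cell} (ha : a ∈ S) (hb : b ∈ S)
    (h1 : a.1 ≤ x.1) (h2 : a.2 ≤ x.2) (h3 : x.1 ≤ b.1) (h4 : x.2 ≤ b.2) : x ∈ S := by
  obtain ⟨l, m, -, rfl⟩ := hS
  simp only [Finset.mem_sdiff, YoungDiagram.mem_cells] at *
  obtain ⟨a1, a2⟩ := a
  obtain ⟨b1, b2⟩ := b
  obtain ⟨x1, x2⟩ := x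
  exact ⟨l.up_left_mem h3 h4 hb.1, fun h => ha.2 (m.up_left_mem h1 h2 h)⟩

lemma isSkew_sdiff {l m : YoungDiagram} (h : m ≤ l) : IsSkewCells (l.cells \ m.cells) :=
  ⟨l, m, h, rfl⟩

lemma IsRibbon.nonempty {n : ℕ} (hn : 1 ≤ n) {S : Finset Cell} (h : IsRibbon n S) :
    S.Nonempty := by
  rw [← Finset.card_pos, h.1]
  exact hn

/-- A ribbon meets every diagonal at most once. -/
lemma ribbon_content_inj {n : ℕ} {S : Finset Cell} (h : IsRibbon n S) {x y : Cell} (hx : x ∈ S)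
    (hy : y ∈ S) (hxy : content x = content y) : x = y := by
  wlog hlt : x.1 ≤ y.1 generalizing x y
  · exact (this hy hx hxy.symm (by omega)).symm
  obtain ⟨a, b⟩ := x
  obtain ⟨c, d⟩ := y
  simp only [content] at hxy hlt
  by_contra hne
  have hac : a < c := by
    rcases lt_or_eq_of_le hlt with h | h
    · exact h
    · exact absurd (Prod.ext (by simpa using h) (by simp; omega)) hne
  exact h.2.2.1 ⟨a, b, hx,
    skew_convex h.2.2.2 hx hy (by simp) (by simp) (by simp; omega) (by simp; omega),
    skew_convex h.2.2.2 hx hy (by simp) (by simp) (by simp; omega) (by simp; omega),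
    skew_convex h.2.2.2 hx hy (by simp) (by simp) (by simp; omega) (by simp; omega)⟩

/-- Discrete intermediate value property along paths in a set of cells. -/
lemma reach_ivt (f : Cell → ℤ) (hf : ∀ x y, Adj x y → |f x - f y| ≤ 1) {S : Finset Cell}
    {a b : Cell} (ha : a ∈ S) (hab : Reach S a b) {d : ℤ} (h1 : f a ≤ d) (h2 : d ≤ f b) :
    ∃ x ∈ S, f x = d := by
  unfold Reach at hab
  induction hab with
  | refl => exact ⟨a, ha, by omega⟩
  | tail hab hbc ih =>
    rename_i b c
    by_cases hb : d ≤ f b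
    · exact ih hb
    · have := hf _ _ hbc.2
      rw [abs_le] at this
      exact ⟨c, hbc.1, by omega⟩

lemma content_adj (x y : Cell) (h : Adj x y) : |content x - content y| ≤ 1 := by
  unfold Adj at h
  unfold content
  rw [abs_le]
  omega

lemma row_adj (x y : Cell) (h : Adj x y) : |(x.1 : ℤ) - (y.1 : ℤ)| ≤ 1 := by
  unfold Adj at h
  rw [abs_le]
  omega

lemma col_adj (x y : Cell) (h : Adj x y) : |(x.2 : ℤ) - (y.2 : ℤ)| ≤ 1 := by
  unfold Adj at h
  rw [abs_le]
  omega

/-- The contents of an `n`-ribbon are the `n` consecutive integers ending at `hd`. -/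
lemma ribbon_image_content {n : ℕ} (hn : 1 ≤ n) {S : Finset Cell} (h : IsRibbon n S) :
    S.image content = Finset.Icc (hd S - n + 1) (hd S) := by
  have hne := IsRibbon.nonempty hn h
  obtain ⟨x, hx, hxh⟩ := exists_content_eq_hd hne
  obtain ⟨y, hy, hymin⟩ := S.exists_min_image content hne
  have himg : S.image content = Finset.Icc (content y) (hd S) := by
    ext d
    simp only [Finset.mem_image, Finset.mem_Icc]
    constructor
    · rintro ⟨z, hz, rfl⟩
      exact ⟨hymin z hz, content_le_hd hz⟩
    · rintro ⟨h1, h2⟩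
      exact reach_ivt content content_adj hy (h.2.1 y hy x hx) h1 (by omega)
  have hcard : (S.image content).card = n := by
    rw [Finset.card_image_of_injOn (fun a ha b hb hab => ribbon_content_inj h ha hb hab), h.1]
  have hle : content y ≤ hd S := content_le_hd hy
  rw [himg, Int.card_Icc] at hcard
  rw [himg]
  congr 1
  omega

lemma ribbon_content_ge {n : ℕ} (hn : 1 ≤ n) {S : Finset Cell} (h : IsRibbon n S) {x : Cell}
    (hx : x ∈ S) : hd S - n + 1 ≤ content x := by
  have := Finset.mem_image_of_mem content hx
  rw [ribbon_image_content hn h, Finset.mem_Icc] at this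
  exact this.1

lemma ribbon_exists_content {n : ℕ} (hn : 1 ≤ n) {S : Finset Cell} (h : IsRibbon n S) {d : ℤ}
    (h1 : hd S - n + 1 ≤ d) (h2 : d ≤ hd S) : ∃ x ∈ S, content x = d := by
  have : d ∈ S.image content := by
    rw [ribbon_image_content hn h, Finset.mem_Icc]
    exact ⟨h1, h2⟩
  simpa using this

/-- From every cell of a ribbon other than its head, the ribbon continues either upwards or to
the right. -/
lemma ribbon_next {n : ℕ} (hn : 1 ≤ n) {S : Finset Cell} (h : IsRibbon n S) {a b : ℕ}
    (hx : (a, b) ∈ S) (hlt : content (a, b) < hd S) :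
    (0 < a ∧ (a - 1, b) ∈ S) ∨ (a, b + 1) ∈ S := by
  have hge := ribbon_content_ge hn h hx
  obtain ⟨⟨c, d⟩, hy, hyc⟩ := ribbon_exists_content hn h (d := content (a, b) + 1)
    (by omega) (by omega)
  simp only [content] at hyc
  by_cases hac : a ≤ c
  · right
    exact skew_convex h.2.2.2 hx hy (by simp) (by simp) (by simp; omega) (by simp; omega)
  · left
    refine ⟨by omega, skew_convex h.2.2.2 hy hx ?_ ?_ ?_ ?_⟩ <;> simp <;> omega

/-- The head of a ribbon lies weakly above and weakly to the right of all its cells. -/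
lemma head_extreme {S : Finset Cell} (hS : IsSkewCells S) {x d : Cell} (hx : x ∈ S)
    (hxh : content x = hd S) (hd' : d ∈ S) : d.2 ≤ x.2 ∧ x.1 ≤ d.1 := by
  obtain ⟨a, b⟩ := x
  obtain ⟨c, e⟩ := d
  have hc := content_le_hd hd'
  rw [← hxh] at hc
  simp only [content] at hc ⊢
  constructor
  · by_contra hlt
    have : (a, e) ∈ S := skew_convex hS hx hd' (by simp) (by simp; omega) (by simp; omega) (by simp)
    have := content_le_hd this
    rw [← hxh] at this
    simp only [content] at this
    omega
  · by_contra hlt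
    have : (c, b) ∈ S := skew_convex hS hd' hx (by simp) (by simp; omega) (by simp; omega) (by simp)
    have := content_le_hd this
    rw [← hxh] at this
    simp only [content] at this
    omega

lemma topRight_iff {n : ℕ} (hn : 1 ≤ n) {S : Finset Cell} (h : IsRibbon n S) (c : Cell) :
    TopRightCell S c ↔ c ∈ S ∧ content c = hd S := by
  constructor
  · rintro ⟨hc, hmax⟩
    obtain ⟨x, hx, hxh⟩ := exists_content_eq_hd (IsRibbon.nonempty hn h)
    have h1 := hmax x hx
    have h2 := head_extreme h.2.2.2 hx hxh hc
    have h3 := h1.2 (by omega)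
    refine ⟨hc, ?_⟩
    rw [← hxh]
    unfold content
    omega
  · rintro ⟨hc, hch⟩
    refine ⟨hc, fun d hd' => ?_⟩
    have := head_extreme h.2.2.2 hc hch hd'
    exact ⟨this.1, fun _ => this.2⟩

/-! ### Transposing ribbons -/

lemma mem_swapCells {S : Finset Cell} {x : Cell} : x ∈ swapCells S ↔ x.swap ∈ S := by
  unfold swapCells
  constructor
  · intro h
    obtain ⟨y, hy, rfl⟩ := Finset.mem_image.1 h
    simpa using hy
  · intro h
    exact Finset.mem_image.2 ⟨x.swap, h, by simp⟩

lemma swapCells_swapCells (S : Finset Cell) : swapCells (swapCells S) = S := by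
  ext x
  simp [mem_swapCells]

lemma swapCells_card (S : Finset Cell) : (swapCells S).card = S.card :=
  Finset.card_image_of_injective _ Prod.swap_injective

lemma swapCells_sdiff (l m : YoungDiagram) :
    l.transpose.cells \ m.transpose.cells = swapCells (l.cells \ m.cells) := by
  ext x
  simp [mem_swapCells, Finset.mem_sdiff, YoungDiagram.mem_transpose]

lemma content_swap (x : Cell) : content x.swap = -content x := by
  simp [content]

lemma reach_swap {S : Finset Cell} {a b : Cell} (h : Reach S a b) :
    Reach (swapCells S) a.swap b.swap := by
  unfold Reach at *
  refine Relation.ReflTransGen.lift (p := fun x y => y ∈ swapCells S ∧ Adj x y) Prod.swap ?_ _ _ h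
  rintro x y ⟨hy, hxy⟩
  refine ⟨by rw [mem_swapCells]; simpa using hy, ?_⟩
  unfold Adj at *
  simp only [Prod.fst_swap, Prod.snd_swap]
  tauto

lemma ribbon_swap {n : ℕ} {S : Finset Cell} (h : IsRibbon n S) : IsRibbon n (swapCells S) := by
  refine ⟨by rw [swapCells_card, h.1], ?_, ?_, ?_⟩
  · intro a ha b hb
    rw [mem_swapCells] at ha hb
    simpa using reach_swap (h.2.1 _ ha _ hb)
  · rintro ⟨i, j, h1, h2, h3, h4⟩
    simp only [mem_swapCells, Prod.swap_prod_mk] at h1 h2 h3 h4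
    exact h.2.2.1 ⟨j, i, h1, h3, h2, h4⟩
  · obtain ⟨l, m, hlm, hS⟩ := h.2.2.2
    exact ⟨l.transpose, m.transpose, YoungDiagram.transpose_mono hlm, by
      rw [swapCells_sdiff, ← hS]⟩

lemma hd_swap {n : ℕ} (hn : 1 ≤ n) {S : Finset Cell} (h : IsRibbon n S) :
    hd (swapCells S) = n - 1 - hd S := by
  have h' := ribbon_swap h
  apply le_antisymm
  · obtain ⟨x, hx, hxh⟩ := exists_content_eq_hd (IsRibbon.nonempty hn h')
    rw [mem_swapCells] at hx
    have := ribbon_content_ge hn h hx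
    rw [content_swap] at this
    omega
  · obtain ⟨x, hx, hxh⟩ := ribbon_exists_content hn h (d := hd S - n + 1) le_rfl (by omega)
    have : x.swap ∈ swapCells S := by
      rw [mem_swapCells]
      simpa using hx
    have := content_le_hd this
    rw [content_swap] at this
    omega

lemma ribbon_rows {n : ℕ} {S : Finset Cell} (h : IsRibbon n S) {x y : Cell}
    (hx : x ∈ S) (hy : y ∈ S) (hxmin : ∀ z ∈ S, x.1 ≤ z.1) (hymax : ∀ z ∈ S, z.1 ≤ y.1) :
    S.image Prod.fst = Finset.Icc x.1 y.1 := by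
  ext d
  simp only [Finset.mem_image, Finset.mem_Icc]
  constructor
  · rintro ⟨z, hz, rfl⟩
    exact ⟨hxmin z hz, hymax z hz⟩
  · rintro ⟨h1, h2⟩
    obtain ⟨z, hz, hzd⟩ := reach_ivt (fun x => (x.1 : ℤ)) row_adj hx (h.2.1 x hx y hy)
      (d := d) (by simpa using h1) (by simpa using h2)
    exact ⟨z, hz, by simpa using hzd⟩

/-- The spins of a ribbon and of its transpose add up to `n - 1`. -/
lemma ribbonSpin_swap {n : ℕ} (hn : 1 ≤ n) {S : Finset Cell} (h : IsRibbon n S) :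
    ribbonSpin (swapCells S) + ribbonSpin S = n - 1 := by
  have h' := ribbon_swap h
  have hne := IsRibbon.nonempty hn h
  -- `x` is the head of `S`, and `y.swap` is its tail, i.e. `y` is the head of the transpose
  obtain ⟨x, hx, hxh⟩ := exists_content_eq_hd hne
  obtain ⟨y, hy, hyh⟩ := exists_content_eq_hd (IsRibbon.nonempty hn h')
  have hxe := fun d (hd' : d ∈ S) => head_extreme h.2.2.2 hx hxh hd'
  have hye := fun d (hd' : d ∈ swapCells S) => head_extreme h'.2.2.2 hy hyh hd'
  have hy' := mem_swapCells.1 hy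
  have hx' : x.swap ∈ swapCells S := by
    rw [mem_swapCells]
    simpa using hx
  have r1 := ribbon_rows h hx hy' (fun z hz => (hxe z hz).2) (fun z hz => by
    have := (hye z.swap (by rw [mem_swapCells]; simpa using hz)).1
    simpa using this)
  have r2 := ribbon_rows h' hy hx' (fun z hz => (hye z hz).2) (fun z hz => by
    have := (hxe z.swap (mem_swapCells.1 hz)).1
    simpa using this)
  unfold ribbonSpin
  rw [r1, r2, Nat.card_Icc, Nat.card_Icc]
  have e := hd_swap hn h
  rw [← hxh, ← hyh] at e
  have e1 := hxe _ hy'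
  simp only [content, Prod.fst_swap, Prod.snd_swap] at *
  omega

/-! ### Standard ribbon tableaux as lists of ribbons -/

/-- `RPath n mu lam L`: adding the `n`-ribbons of the list `L` to `mu`, one after the other, gives
a chain of partitions ending at `lam`. Such a list is the same thing as a standard `n`-ribbon
tableau of shape `lam/mu`. -/
def RPath (n : ℕ) : YoungDiagram → YoungDiagram → List (Finset Cell) → Prop
  | mu, lam, [] => mu = lam
  | mu, lam, R :: L =>
    ∃ kap : YoungDiagram, mu ≤ kap ∧ kap.cells \ mu.cells = R ∧ IsRibbon n R ∧ RPath n kap lam L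

lemma RPath.append_iff {n : ℕ} {mu lam : YoungDiagram} {L M : List (Finset Cell)} :
    RPath n mu lam (L ++ M) ↔ ∃ kap, RPath n mu kap L ∧ RPath n kap lam M := by
  induction L generalizing mu with
  | nil => simp [RPath]
  | cons R L ih =>
    simp only [List.cons_append, RPath, ih]
    constructor
    · rintro ⟨k, h1, h2, h3, k', h4, h5⟩
      exact ⟨k', ⟨k, h1, h2, h3, h4⟩, h5⟩
    · rintro ⟨k', ⟨k, h1, h2, h3, h4⟩, h5⟩
      exact ⟨k, h1, h2, h3, k', h4, h5⟩

lemma RPath.le {n : ℕ} {mu lam : YoungDiagram} {L : List (Finset Cell)} (h : RPath n mu lam L) :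
    mu ≤ lam := by
  induction L generalizing mu with
  | nil => exact le_of_eq h
  | cons R L ih =>
    obtain ⟨k, h1, -, -, h4⟩ := h
    exact h1.trans (ih h4)

lemma RPath.ribbon {n : ℕ} {mu lam : YoungDiagram} {L : List (Finset Cell)}
    (h : RPath n mu lam L) : ∀ R ∈ L, IsRibbon n R := by
  induction L generalizing mu with
  | nil => simp
  | cons R L ih =>
    obtain ⟨k, h1, h2, h3, h4⟩ := h
    intro S hS
    rcases List.mem_cons.1 hS with rfl | hS
    · exact h3
    · exact ih h4 S hS

lemma RPath.mem_sdiff_iff {n : ℕ} {mu lam : YoungDiagram} {L : List (Finset Cell)}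
    (h : RPath n mu lam L) (x : Cell) :
    x ∈ lam.cells \ mu.cells ↔ ∃ R ∈ L, x ∈ R := by
  induction L generalizing mu with
  | nil =>
    have h : mu = lam := h
    simp [h]
  | cons R L ih =>
    obtain ⟨k, h1, h2, h3, h4⟩ := h
    have hk := YoungDiagram.cells_subset_iff.2 h1
    have hl := YoungDiagram.cells_subset_iff.2 h4.le
    simp only [List.mem_cons, exists_eq_or_imp, ← ih h4, ← h2, Finset.mem_sdiff]
    have h5 := @hk x
    have h6 := @hl x
    tauto

lemma RPath.disjoint {n : ℕ} {mu lam : YoungDiagram} {L : List (Finset Cell)}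
    (h : RPath n mu lam L) : L.Pairwise Disjoint := by
  induction L generalizing mu with
  | nil => simp
  | cons R L ih =>
    obtain ⟨k, h1, h2, h3, h4⟩ := h
    refine List.pairwise_cons.2 ⟨fun S hS => ?_, ih h4⟩
    rw [Finset.disjoint_left]
    intro x hx hxS
    have := (h4.mem_sdiff_iff x).2 ⟨S, hS, hxS⟩
    rw [← h2] at hx
    simp only [Finset.mem_sdiff] at hx this
    exact this.2 hx.1

lemma RPath.card {n : ℕ} {mu lam : YoungDiagram} {L : List (Finset Cell)}
    (h : RPath n mu lam L) : lam.card = mu.card + n * L.length := by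
  induction L generalizing mu with
  | nil =>
    have h : mu = lam := h
    simp [h]
  | cons R L ih =>
    obtain ⟨k, h1, h2, h3, h4⟩ := h
    have hk := YoungDiagram.cells_subset_iff.2 h1
    have e1 := Finset.card_sdiff_add_card_eq_card hk
    rw [h2, h3.1] at e1
    have e2 : k.card = k.cells.card := rfl
    have e3 : mu.card = mu.cells.card := rfl
    rw [ih h4, List.length_cons]
    rw [mul_add]
    omega

/-- Two ribbons added in succession have different heads. -/
lemma hd_ne {n : ℕ} (hn : 1 ≤ n) {mu kap lam : YoungDiagram}
    (hR : IsRibbon n (kap.cells \ mu.cells)) (hS : IsRibbon n (lam.cells \ kap.cells)) :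
    hd (kap.cells \ mu.cells) ≠ hd (lam.cells \ kap.cells) := by
  intro heq
  obtain ⟨⟨a, b⟩, hx, hxh⟩ := exists_content_eq_hd (IsRibbon.nonempty hn hR)
  obtain ⟨⟨c, d⟩, hy, hyh⟩ := exists_content_eq_hd (IsRibbon.nonempty hn hS)
  rw [← heq, ← hxh] at hyh
  have hx' := hx
  have hy' := hy
  simp only [Finset.mem_sdiff, YoungDiagram.mem_cells] at hx' hy'
  simp only [content] at hyh
  have hac : a < c := by
    by_contra hle
    exact hy'.2 (kap.up_left_mem (by omega) (by omega) hx'.1)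
  -- the cell to the right of the first head lies in `lam` but in neither ribbon
  have hz : (a, b + 1) ∈ lam := lam.up_left_mem hac.le (by omega) hy'.1
  have hzm : (a, b + 1) ∉ mu := fun h => hx'.2 (mu.up_left_mem le_rfl (by omega) h)
  by_cases hzk : (a, b + 1) ∈ kap
  · have := content_le_hd (S := kap.cells \ mu.cells) (x := (a, b + 1)) (by simp [hzk, hzm])
    rw [← hxh] at this
    simp only [content] at this
    omega
  · have := content_le_hd (S := lam.cells \ kap.cells) (x := (a, b + 1)) (by simp [hzk, hz])
    rw [← heq, ← hxh] at this
    simp only [content] at this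
    omega

/-! ### Horizontal strips are increasing sequences of ribbon additions -/

/-- Ribbons are added with strictly increasing head contents. -/
def HInc (L : List (Finset Cell)) : Prop := L.Pairwise fun R S => hd R < hd S

lemma HInc.nodup {L : List (Finset Cell)} (h : HInc L) : L.Nodup :=
  List.Pairwise.imp (fun {R S} hRS (e : R = S) => by simp [e] at hRS) h

lemma HInc.eq_of_toFinset_eq {L M : List (Finset Cell)} (hL : HInc L) (hM : HInc M)
    (h : L.toFinset = M.toFinset) : L = M :=
  List.Perm.eq_of_pairwise (le := fun R S => hd R < hd S)
    (fun a b _ _ h1 h2 => absurd h1 (not_lt.2 h2.le)) hL hM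
    ((List.toFinset_eq_iff_perm_dedup.1 h).trans (by rw [hM.nodup.dedup]) |>
      fun p => by rwa [hL.nodup.dedup] at p)

/-- Adding ribbons with increasing head contents builds a horizontal strip; `path_of_hstrip` is the
converse. -/
lemma hstrip_of_path {n : ℕ} (hn : 1 ≤ n) {mu lam : YoungDiagram} {L : List (Finset Cell)}
    (h : RPath n mu lam L) (hL : HInc L) :
    IsHStripTiling n (lam.cells \ mu.cells) L.toFinset := by
  refine ⟨⟨fun R hR => h.ribbon R (by simpa using hR), ?_, ?_⟩, ?_⟩
  · intro A hA B hB hAB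
    have hA : A ∈ L := by simpa using hA
    have hB : B ∈ L := by simpa using hB
    exact h.disjoint.forall hA hB hAB
  · ext x
    rw [h.mem_sdiff_iff x]
    simp
  · intro R hR x hx
    have hR : R ∈ L := by simpa using hR
    rw [topRight_iff hn (h.ribbon R hR)] at hx
    by_contra hcon
    push Not at hcon
    obtain ⟨h0, hmem⟩ := hcon
    obtain ⟨L1, L2, rfl⟩ := List.append_of_mem hR
    obtain ⟨k1, p1, k2, hk, hkR, -, p2⟩ := RPath.append_iff.1 h
    have hxR := hx.1
    rw [← hkR] at hxR
    obtain ⟨a, b⟩ := x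
    simp only [Finset.mem_sdiff, YoungDiagram.mem_cells] at hxR hmem
    simp only at h0
    have hk2 : (a - 1, b) ∈ k2 := k2.up_left_mem (by omega) le_rfl hxR.1
    have hh := hx.2
    simp only [content] at hh
    by_cases hk1 : (a - 1, b) ∈ k1
    · obtain ⟨R', hR', hx'⟩ := (p1.mem_sdiff_iff (a - 1, b)).1 (by simp [hk1, hmem.2])
      have h1 := content_le_hd hx'
      have h2 : hd R' < hd R := (List.pairwise_append.1 hL).2.2 R' hR' R (by simp)
      simp only [content] at h1
      omega
    · have h1 : (a - 1, b) ∈ R := by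
        rw [← hkR]
        simp [hk1, hk2]
      have h1 := content_le_hd h1
      simp only [content] at h1
      omega

/-- In a horizontal strip, a ribbon whose head is not to the right of that of `R` has no cell
strictly southeast of `R` on a common diagonal: following both ribbons up to the head of the
former, this head would have a cell of the strip directly above it. -/
lemma no_southeast {n : ℕ} (hn : 1 ≤ n) {mu lam : YoungDiagram} (hsub : mu ≤ lam)
    {T : Finset (Finset Cell)} (hT : IsHStripTiling n (lam.cells \ mu.cells) T)
    {R R' : Finset Cell} (hR : R ∈ T) (hR' : R' ∈ T) (hne : R ≠ R') (hle : hd R' ≤ hd R)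
    (g : ℕ) : ∀ (p q k : ℕ), (p, q) ∈ R → (p + k, q + k) ∈ R' → 1 ≤ k →
      hd R' - content (p + k, q + k) = g → False := by
  have hsubset : ∀ A ∈ T, ∀ x ∈ A, x ∈ lam.cells \ mu.cells := by
    intro A hA x hx
    rw [← hT.1.2.2]
    exact Finset.mem_biUnion.2 ⟨A, hA, hx⟩
  induction g with
  | zero =>
    intro p q k hx hy hk hg
    have htop := (topRight_iff hn (hT.1.1 R' hR') (p + k, q + k)).2 ⟨hy, by push_cast at hg; omega⟩
    rcases hT.2 R' hR' _ htop with h | h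
    · simp at h
      omega
    · apply h
      exact skew_convex (isSkew_sdiff hsub) (hsubset R hR _ hx) (hsubset R' hR' _ hy)
        (by simp; omega) (by simp) (by simp) (by simp)
  | succ g ih =>
    intro p q k hx hy hk hg
    have hc : content (p, q) = content (p + k, q + k) := by
      simp only [content]
      push_cast
      ring
    push_cast at hg
    have nx := ribbon_next hn (hT.1.1 R hR) hx (by omega)
    have ny := ribbon_next hn (hT.1.1 R' hR') hy (by omega)
    simp only [content] at hg
    push_cast at hg
    rcases nx with ⟨hp, nx⟩ | nx <;> rcases ny with ⟨hpk, ny⟩ | ny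
    · refine ih (p - 1) q k nx ?_ hk ?_
      · convert ny using 2
        omega
      · simp only [content]
        push_cast
        omega
    · refine ih (p - 1) q (k + 1) nx ?_ (by omega) ?_
      · convert ny using 2 <;> omega
      · simp only [content]
        push_cast
        omega
    · rcases Nat.lt_or_ge 1 k with hk1 | hk1
      · refine ih p (q + 1) (k - 1) nx ?_ (by omega) ?_
        · convert ny using 2 <;> omega
        · simp only [content]
          push_cast
          omega
      · obtain rfl : k = 1 := by omega
        have hd1 := hT.1.2.1 hR hR' hne
        exact Finset.disjoint_left.1 hd1 nx (by simpa using ny)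
    · refine ih p (q + 1) k nx ?_ hk ?_
      · convert ny using 2
        omega
      · simp only [content]
        push_cast
        omega

lemma hstrip_hd_inj {n : ℕ} (hn : 1 ≤ n) {mu lam : YoungDiagram} (hsub : mu ≤ lam)
    {T : Finset (Finset Cell)} (hT : IsHStripTiling n (lam.cells \ mu.cells) T)
    {R R' : Finset Cell} (hR : R ∈ T) (hR' : R' ∈ T) (heq : hd R = hd R') : R = R' := by
  by_contra hne
  obtain ⟨⟨a, b⟩, hx, hxh⟩ := exists_content_eq_hd (IsRibbon.nonempty hn (hT.1.1 R hR))
  obtain ⟨⟨c, d⟩, hy, hyh⟩ := exists_content_eq_hd (IsRibbon.nonempty hn (hT.1.1 R' hR'))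
  have hc : content (a, b) = content (c, d) := by rw [hxh, hyh, heq]
  have hc' := hc
  simp only [content] at hc'
  rcases lt_trichotomy a c with h | h | h
  · obtain ⟨k, rfl⟩ := Nat.exists_eq_add_of_le h.le
    obtain rfl : d = b + k := by omega
    exact no_southeast hn hsub hT hR hR' hne heq.ge 0 a b k hx hy (by omega) (by rw [hyh]; simp)
  · obtain rfl : b = d := by omega
    subst h
    exact Finset.disjoint_left.1 (hT.1.2.1 hR hR' hne) hx hy
  · obtain ⟨k, rfl⟩ := Nat.exists_eq_add_of_le h.le
    obtain rfl : b = d + k := by omega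
    exact no_southeast hn hsub hT hR' hR (Ne.symm hne) heq.le 0 c d k hy hx (by omega)
      (by rw [hxh]; simp)

/-- The ribbon with the rightmost head of a horizontal strip can be removed from the outer
partition. -/
lemma hstrip_removable {n : ℕ} (hn : 1 ≤ n) {mu lam : YoungDiagram} (hsub : mu ≤ lam)
    {T : Finset (Finset Cell)} (hT : IsHStripTiling n (lam.cells \ mu.cells) T)
    {R : Finset Cell} (hR : R ∈ T) (hmax : ∀ R' ∈ T, hd R' ≤ hd R) :
    IsLowerSet ((lam.cells \ R : Finset Cell) : Set Cell) := by
  have hsubset : ∀ A ∈ T, ∀ x ∈ A, x ∈ lam.cells \ mu.cells := by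
    intro A hA x hx
    rw [← hT.1.2.2]
    exact Finset.mem_biUnion.2 ⟨A, hA, hx⟩
  -- it suffices to look at the right and lower neighbours of the cells of `R`
  have hright : ∀ a b, (a, b) ∈ R → (a, b + 1) ∈ lam → (a, b + 1) ∈ R := by
    intro a b hx hy
    by_contra hyR
    have hx' := hsubset R hR _ hx
    simp only [Finset.mem_sdiff, YoungDiagram.mem_cells] at hx'
    have hy' : (a, b + 1) ∈ lam.cells \ mu.cells := by
      simp only [Finset.mem_sdiff, YoungDiagram.mem_cells]
      exact ⟨hy, fun h => hx'.2 (mu.up_left_mem le_rfl (by omega) h)⟩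
    rw [← hT.1.2.2] at hy'
    obtain ⟨R', hR', hyR'⟩ := Finset.mem_biUnion.1 hy'
    simp only [id] at hyR'
    have hne : R ≠ R' := by
      rintro rfl
      exact hyR hyR'
    have hc := content_le_hd hyR'
    have hle := hmax R' hR'
    have hc' : content (a, b + 1) = content (a, b) + 1 := by
      simp only [content]
      push_cast
      ring
    rcases ribbon_next hn (hT.1.1 R hR) hx (by omega) with ⟨ha, h⟩ | h
    · obtain ⟨g, hg⟩ := Int.eq_ofNat_of_zero_le (a := hd R' - content (a, b + 1)) (by omega)
      have ha' : a - 1 + 1 = a := by omega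
      exact no_southeast hn hsub hT hR hR' hne hle g (a - 1) b 1 h (by rw [ha']; exact hyR')
        le_rfl (by rw [ha']; exact hg)
    · exact hyR h
  have hdown : ∀ a b, (a, b) ∈ R → (a + 1, b) ∈ lam → (a + 1, b) ∈ R := by
    intro a b hx hy
    by_contra hyR
    have hx' := hsubset R hR _ hx
    have hx'' := hx'
    simp only [Finset.mem_sdiff, YoungDiagram.mem_cells] at hx'
    have hy' : (a + 1, b) ∈ lam.cells \ mu.cells := by
      simp only [Finset.mem_sdiff, YoungDiagram.mem_cells]
      exact ⟨hy, fun h => hx'.2 (mu.up_left_mem (by omega) le_rfl h)⟩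
    rw [← hT.1.2.2] at hy'
    obtain ⟨R', hR', hyR'⟩ := Finset.mem_biUnion.1 hy'
    simp only [id] at hyR'
    have hne : R ≠ R' := by
      rintro rfl
      exact hyR hyR'
    have hc := content_le_hd hyR'
    have hle := hmax R' hR'
    rcases lt_or_eq_of_le hc with hc | hc
    · rcases ribbon_next hn (hT.1.1 R' hR') hyR' hc with ⟨-, h⟩ | h
      · exact Finset.disjoint_left.1 (hT.1.2.1 hR hR' hne) hx (by simpa using h)
      · have hc' := content_le_hd h
        obtain ⟨g, hg⟩ := Int.eq_ofNat_of_zero_le (a := hd R' - content (a + 1, b + 1)) (by omega)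
        exact no_southeast hn hsub hT hR hR' hne hle g a b 1 hx h le_rfl hg
    · have htop := (topRight_iff hn (hT.1.1 R' hR') (a + 1, b)).2 ⟨hyR', hc⟩
      rcases hT.2 R' hR' _ htop with h | h
      · simp at h
      · exact h (by simpa using hx')
  rintro ⟨a, b⟩ ⟨c, d⟩ hcd hab
  obtain ⟨h1, h2⟩ := Prod.mk_le_mk.1 hcd
  simp only [Finset.coe_sdiff, Set.mem_sdiff, Finset.mem_coe, YoungDiagram.mem_cells] at hab ⊢
  refine ⟨lam.up_left_mem h1 h2 hab.1, fun hx => hab.2 ?_⟩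
  obtain ⟨s, rfl⟩ := Nat.exists_eq_add_of_le h1
  obtain ⟨t, rfl⟩ := Nat.exists_eq_add_of_le h2
  have hrow : ∀ s, (c + s, d + t) ∈ lam → (c + s, d) ∈ R := by
    intro s hs
    induction s with
    | zero => exact hx
    | succ s ih =>
      exact hdown _ _ (ih (lam.up_left_mem (by omega) le_rfl hs))
        (lam.up_left_mem le_rfl (by omega) hs)
  have hcol : ∀ t, (c + s, d + t) ∈ lam → (c + s, d) ∈ R → (c + s, d + t) ∈ R := by
    intro t ht h0
    induction t with
    | zero => exact h0
    | succ t ih => exact hright _ _ (ih (lam.up_left_mem le_rfl (by omega) ht)) ht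
  exact hcol t hab.1 (hrow s hab.1)

/-- The ribbons of a horizontal strip can be added one by one, in order of increasing head
contents. By induction, removing the ribbon with the rightmost head. -/
lemma path_of_hstrip {n : ℕ} (hn : 1 ≤ n) {mu : YoungDiagram} (c : ℕ) :
    ∀ (lam : YoungDiagram) (T : Finset (Finset Cell)), mu ≤ lam → T.card = c →
      IsHStripTiling n (lam.cells \ mu.cells) T →
      ∃ L, RPath n mu lam L ∧ HInc L ∧ L.toFinset = T := by
  induction c with
  | zero =>
    intro lam T hsub hc hT
    obtain rfl := Finset.card_eq_zero.1 hc
    refine ⟨[], ?_, by simp [HInc], by simp⟩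
    have h := hT.1.2.2
    simp only [Finset.biUnion_empty] at h
    exact le_antisymm hsub
      (YoungDiagram.cells_subset_iff.1 (Finset.sdiff_eq_empty_iff_subset.1 h.symm))
  | succ c ih =>
    intro lam T hsub hc hT
    obtain ⟨R, hR, hmax⟩ := T.exists_max_image hd (Finset.card_pos.1 (by omega))
    have hRsub : ∀ x ∈ R, x ∈ lam.cells \ mu.cells := by
      intro x hx
      rw [← hT.1.2.2]
      exact Finset.mem_biUnion.2 ⟨R, hR, hx⟩
    let kap : YoungDiagram := ⟨lam.cells \ R, hstrip_removable hn hsub hT hR hmax⟩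
    have hkap : ∀ x, x ∈ kap ↔ x ∈ lam ∧ x ∉ R := fun x => by
      rw [← YoungDiagram.mem_cells]
      simp [kap]
    have hmk : mu ≤ kap := by
      intro x hx
      rw [hkap]
      refine ⟨hsub hx, fun hxR => ?_⟩
      have := hRsub x hxR
      simp only [Finset.mem_sdiff, YoungDiagram.mem_cells] at this
      exact this.2 hx
    have hkl : kap ≤ lam := fun x hx => ((hkap x).1 hx).1
    have hlk : lam.cells \ kap.cells = R := by
      ext x
      simp only [Finset.mem_sdiff, YoungDiagram.mem_cells, hkap]
      constructor
      · rintro ⟨h1, h2⟩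
        by_contra h
        exact h2 ⟨h1, h⟩
      · intro h
        have := hRsub x h
        simp only [Finset.mem_sdiff, YoungDiagram.mem_cells] at this
        exact ⟨this.1, fun h' => h'.2 h⟩
    have hT' : IsHStripTiling n (kap.cells \ mu.cells) (T.erase R) := by
      refine ⟨⟨fun S hS => hT.1.1 S (Finset.mem_of_mem_erase hS), ?_, ?_⟩, ?_⟩
      · intro A hA B hB hAB
        exact hT.1.2.1 (Finset.mem_of_mem_erase (Finset.mem_coe.1 hA))
          (Finset.mem_of_mem_erase (Finset.mem_coe.1 hB)) hAB
      · ext x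
        have hx : x ∈ T.biUnion id ↔ x ∈ lam.cells \ mu.cells := by rw [hT.1.2.2]
        simp only [Finset.mem_biUnion, Finset.mem_sdiff, YoungDiagram.mem_cells, id,
          Finset.mem_erase, hkap] at hx ⊢
        constructor
        · rintro ⟨S, ⟨hSR, hS⟩, hxS⟩
          have := hx.1 ⟨S, hS, hxS⟩
          exact ⟨⟨this.1, Finset.disjoint_left.1 (hT.1.2.1 hS hR hSR) hxS⟩, this.2⟩
        · rintro ⟨⟨h1, h2⟩, h3⟩
          obtain ⟨S, hS, hxS⟩ := hx.2 ⟨h1, h3⟩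
          refine ⟨S, ⟨?_, hS⟩, hxS⟩
          rintro rfl
          exact h2 hxS
      · intro S hS x hx
        rcases hT.2 S (Finset.mem_of_mem_erase hS) x hx with h | h
        · exact Or.inl h
        · right
          intro h'
          apply h
          simp only [Finset.mem_sdiff, YoungDiagram.mem_cells] at h' ⊢
          exact ⟨hkl h'.1, h'.2⟩
    obtain ⟨L, hL, hinc, hLT⟩ := ih kap (T.erase R) hmk
      (by rw [Finset.card_erase_of_mem hR]; omega) hT'
    refine ⟨L ++ [R], RPath.append_iff.2 ⟨kap, hL, lam, hkl, hlk, hT.1.1 R hR, rfl⟩, ?_, ?_⟩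
    · refine List.pairwise_append.2 ⟨hinc, by simp, fun S hS S' hS' => ?_⟩
      obtain rfl : S' = R := by simpa using hS'
      have hS : S ∈ T.erase S' := by
        rw [← hLT]
        simpa using hS
      rw [Finset.mem_erase] at hS
      exact lt_of_le_of_ne (hmax S hS.2) fun h => hS.1 (hstrip_hd_inj hn hsub hT hS.2 hR h)
    · rw [List.toFinset_append, hLT]
      simp only [List.toFinset_cons, List.toFinset_nil]
      ext S
      by_cases h : S = R
      · simp [h, hR]
      · simp [h]

/-! ### Ascents and block-increasing standard tableaux -/

/-- `i` is an ascent of the standard ribbon tableau `L` if the head of the `i`-th ribbon has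
smaller content than that of the `(i+1)`-st one (counting from `0`). The value is only
meaningful for `i + 1 < L.length`. -/
def Asc (L : List (Finset Cell)) (i : ℕ) : Prop := hd (L.getD i ∅) < hd (L.getD (i + 1) ∅)

/-- The spin of a standard ribbon tableau. -/
noncomputable def spinL (L : List (Finset Cell)) : ℕ := (L.map ribbonSpin).sum

/-- `L` is a concatenation of blocks with increasing head contents, whose lengths are the
entries of `al`. -/
def BlockInc : List ℕ → List (Finset Cell) → Prop
  | [], L => L = []
  | a :: al, L => a ≤ L.length ∧ HInc (L.take a) ∧ BlockInc al (L.drop a)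

lemma hInc_cons_cons {R S : Finset Cell} {L : List (Finset Cell)} :
    HInc (R :: S :: L) ↔ hd R < hd S ∧ HInc (S :: L) := by
  unfold HInc
  simp only [List.pairwise_cons, List.mem_cons, forall_eq_or_imp]
  constructor
  · rintro ⟨⟨h1, h2⟩, h3, h4⟩
    exact ⟨h1, h3, h4⟩
  · rintro ⟨h1, h3, h4⟩
    exact ⟨⟨h1, fun a ha => h1.trans (h3 a ha)⟩, h3, h4⟩

lemma blockInc_one_cons {al : List ℕ} {R : Finset Cell} {L : List (Finset Cell)} :
    BlockInc (1 :: al) (R :: L) ↔ BlockInc al L := by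
  simp [BlockInc, HInc]

lemma blockInc_succ_cons {a : ℕ} {al : List ℕ} {R S : Finset Cell} {L : List (Finset Cell)} :
    BlockInc ((a + 2) :: al) (R :: S :: L) ↔ hd R < hd S ∧ BlockInc ((a + 1) :: al) (S :: L) := by
  simp only [BlockInc, List.take_succ_cons, hInc_cons_cons, List.drop_succ_cons, List.length_cons]
  constructor
  · rintro ⟨h1, ⟨h2, h3⟩, h4⟩
    exact ⟨h2, by omega, h3, h4⟩
  · rintro ⟨h2, h1, h3, h4⟩
    exact ⟨by omega, ⟨h2, h3⟩, h4⟩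

lemma blockInc_replicate_zero (N : ℕ) : BlockInc (List.replicate N 0) [] := by
  induction N with
  | zero => rfl
  | succ N ih => simpa [List.replicate_succ, BlockInc, HInc] using ih

/-- Every set of prescribed ascents comes from a weak composition of `m` with `N ≥ m` parts. -/
lemma exists_weight (m : ℕ) : ∀ (N : ℕ) (A : Set ℕ), m ≤ N → ∃ al : List ℕ, al.length = N ∧
    al.sum = m ∧ (0 < m → ∃ a be, al = (a + 1) :: be) ∧
    ∀ L : List (Finset Cell), L.length = m →
      (BlockInc al L ↔ ∀ i ∈ A, i + 1 < m → Asc L i) := by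
  induction m with
  | zero =>
    intro N A _
    refine ⟨List.replicate N 0, by simp, by simp, by simp, ?_⟩
    intro L hL
    obtain rfl := List.length_eq_zero_iff.1 hL
    simp [blockInc_replicate_zero]
  | succ m ih =>
    intro N A hN
    have key : ∀ (R : Finset Cell) (L : List (Finset Cell)),
        (∀ i ∈ A, i + 1 < m + 1 → Asc (R :: L) i) ↔
          (0 ∈ A → 0 < m → Asc (R :: L) 0) ∧
            ∀ i ∈ {i | i + 1 ∈ A}, i + 1 < m → Asc L i := by
      intro R L
      constructor
      · intro h
        refine ⟨fun h0 hm => h 0 h0 (by omega), fun i hi him => ?_⟩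
        simpa [Asc] using h (i + 1) hi (by omega)
      · rintro ⟨h0, h⟩ i hi him
        cases i with
        | zero => exact h0 hi (by omega)
        | succ i => simpa [Asc] using h i hi (by omega)
    by_cases hA : 0 ∈ A ∧ 0 < m
    · obtain ⟨al, h1, h2, h3, h4⟩ := ih N {i | i + 1 ∈ A} (by omega)
      obtain ⟨a, be, rfl⟩ := h3 hA.2
      refine ⟨(a + 2) :: be, by simpa using h1, ?_, fun _ => ⟨a + 1, be, rfl⟩, ?_⟩
      · simp only [List.sum_cons] at h2 ⊢
        omega
      · intro L hL
        match L, hL with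
        | [R], hL => simp at hL; omega
        | R :: S :: L, hL =>
          rw [blockInc_succ_cons, key, h4 (S :: L) (by simpa using hL)]
          simp [Asc, hA]
    · obtain ⟨al, h1, h2, h3, h4⟩ := ih (N - 1) {i | i + 1 ∈ A} (by omega)
      refine ⟨1 :: al, by simp [h1]; omega, by simp [h2]; omega, fun _ => ⟨0, al, rfl⟩, ?_⟩
      intro L hL
      match L, hL with
      | R :: L, hL =>
        rw [blockInc_one_cons, key, h4 L (by simpa using hL)]
        tauto

/-! ### Ribbon tableaux as block-increasing standard tableaux -/

lemma path_concat {n : ℕ} : ∀ {N : ℕ} (chain : Fin (N + 1) → YoungDiagram)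
    (f : Fin N → List (Finset Cell)),
    (∀ i, RPath n (chain i.castSucc) (chain i.succ) (f i)) →
      RPath n (chain 0) (chain (Fin.last N)) (List.ofFn f).flatten := by
  intro N
  induction N with
  | zero => intro chain f _; simp [RPath]
  | succ N ih =>
    intro chain f h
    rw [List.ofFn_succ, List.flatten_cons, RPath.append_iff]
    refine ⟨chain 1, h 0, ?_⟩
    exact ih (fun i => chain i.succ) (fun i => f i.succ) (fun i => h i.succ)

lemma block_concat : ∀ {N : ℕ} (f : Fin N → List (Finset Cell)), (∀ i, HInc (f i)) →
    BlockInc (List.ofFn fun i => (f i).length) (List.ofFn f).flatten := by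
  intro N
  induction N with
  | zero => intro f _; simp [BlockInc]
  | succ N ih =>
    intro f h
    rw [List.ofFn_succ, List.ofFn_succ, List.flatten_cons]
    refine ⟨by simp, ?_, ?_⟩
    · rw [List.take_left]
      exact h 0
    · rw [List.drop_left]
      exact ih (fun i => f i.succ) (fun i => h i.succ)

lemma path_split {n : ℕ} {lam : YoungDiagram} : ∀ {N : ℕ} (al : Fin N → ℕ) {mu : YoungDiagram}
    {L : List (Finset Cell)}, RPath n mu lam L → BlockInc (List.ofFn al) L →
    ∃ (chain : Fin (N + 1) → YoungDiagram) (f : Fin N → List (Finset Cell)),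
      chain 0 = mu ∧ chain (Fin.last N) = lam ∧
      (∀ i, RPath n (chain i.castSucc) (chain i.succ) (f i)) ∧ (∀ i, HInc (f i)) ∧
      (∀ i, (f i).length = al i) ∧ (List.ofFn f).flatten = L := by
  intro N
  induction N with
  | zero =>
    intro al mu L hp hb
    have hb : L = [] := by simpa [BlockInc] using hb
    subst hb
    have hp : mu = lam := hp
    exact ⟨fun _ => mu, fun _ => [], rfl, hp, fun i => i.elim0, fun i => i.elim0,
      fun i => i.elim0, by simp⟩
  | succ N ih =>
    intro al mu L hp hb
    rw [List.ofFn_succ] at hb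
    obtain ⟨h1, h2, h3⟩ := hb
    rw [← List.take_append_drop (al 0) L, RPath.append_iff] at hp
    obtain ⟨kap, hp1, hp2⟩ := hp
    obtain ⟨chain, f, c0, cl, hc, hi, hl, hf⟩ := ih (fun i => al i.succ) hp2 h3
    refine ⟨Fin.cons mu chain, Fin.cons (L.take (al 0)) f, rfl, ?_, ?_, ?_, ?_, ?_⟩
    · rw [← Fin.succ_last, Fin.cons_succ, cl]
    · intro i
      refine Fin.cases ?_ (fun j => ?_) i
      · simpa [c0] using hp1
      · simpa [← Fin.succ_castSucc] using hc j
    · intro i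
      refine Fin.cases ?_ (fun j => ?_) i
      · simpa using h2
      · simpa using hi j
    · intro i
      refine Fin.cases ?_ (fun j => ?_) i
      · simpa using h1
      · simpa using hl j
    · rw [List.ofFn_succ, List.flatten_cons]
      simp [hf]

lemma RPath.nodup {n : ℕ} (hn : 1 ≤ n) {mu lam : YoungDiagram} {L : List (Finset Cell)}
    (h : RPath n mu lam L) : L.Nodup := by
  refine List.Pairwise.imp_of_mem (fun {R S} hR _ hRS (e : R = S) => ?_) h.disjoint
  subst e
  exact (IsRibbon.nonempty hn (h.ribbon R hR)).ne_empty (disjoint_self.1 hRS)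

lemma RPath.length_eq {n : ℕ} (hn : 1 ≤ n) {mu lam : YoungDiagram} {L : List (Finset Cell)}
    (h : RPath n mu lam L) {m : ℕ} (hm : lam.card = mu.card + n * m) : L.length = m := by
  have := h.card
  exact Nat.eq_of_mul_eq_mul_left hn (by omega)

lemma paths_finite (n : ℕ) (hn : 1 ≤ n) (mu lam : YoungDiagram) :
    {L | RPath n mu lam L}.Finite := by
  let P : Finset (Finset Cell) := lam.cells.powerset
  refine ((List.finite_length_eq {x // x ∈ P} ((lam.card - mu.card) / n)).image
    (List.map Subtype.val)).subset ?_
  intro L (hL : RPath n mu lam L)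
  have hmem : ∀ R ∈ L, R ∈ P := by
    intro R hR
    refine Finset.mem_powerset.2 fun x hx => ?_
    exact (Finset.mem_sdiff.1 ((hL.mem_sdiff_iff x).2 ⟨R, hR, hx⟩)).1
  have hlen : L.length = (lam.card - mu.card) / n := by
    rw [hL.card, Nat.add_sub_cancel_left, Nat.mul_div_cancel_left _ hn]
  lift L to List {x // x ∈ P} using hmem
  exact ⟨L, by simpa using hlen, rfl⟩

/-- The finite set of standard `n`-ribbon tableaux of shape `lam/mu`. -/
noncomputable def paths (n : ℕ) (hn : 1 ≤ n) (mu lam : YoungDiagram) :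
    Finset (List (Finset Cell)) := (paths_finite n hn mu lam).toFinset

lemma mem_paths {n : ℕ} {hn : 1 ≤ n} {mu lam : YoungDiagram} {L : List (Finset Cell)} :
    L ∈ paths n hn mu lam ↔ RPath n mu lam L := by
  simp [paths]

/-- A ribbon tableau is determined by its tilings. -/
lemma tableau_ext {n N : ℕ} {lam mu : YoungDiagram} {S T : RibbonTableau n N lam mu}
    (h : S.tiling = T.tiling) : S = T := by
  have hchain : S.chain = T.chain := by
    funext i
    refine Fin.induction ?_ (fun i ih => ?_) i
    · rw [S.chain_zero, T.chain_zero]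
    · have hs := (S.tiling_strip i).1.2.2
      have ht := (T.tiling_strip i).1.2.2
      rw [h, ht, ih] at hs
      have h1 := YoungDiagram.cells_subset_iff.2 (S.chain_mono i)
      have h2 := YoungDiagram.cells_subset_iff.2 (T.chain_mono i)
      rw [ih] at h1
      apply YoungDiagram.ext
      rw [← Finset.sdiff_union_of_subset h1, ← Finset.sdiff_union_of_subset h2, hs]
  obtain ⟨c, h1, h2, h3, t, h4⟩ := S
  obtain ⟨c', h1', h2', h3', t', h4'⟩ := T
  obtain rfl : c = c' := hchain
  obtain rfl : t = t' := h
  rfl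

lemma chain_le_last {n N : ℕ} {lam mu : YoungDiagram} (T : RibbonTableau n N lam mu)
    (i : Fin (N + 1)) : T.chain i ≤ lam := by
  have h : T.chain i ≤ T.chain (Fin.last N) :=
    (Fin.monotone_iff_le_succ.2 T.chain_mono) (Fin.le_last i)
  rwa [T.chain_last] at h

instance tableau_finite (n N : ℕ) (lam mu : YoungDiagram) : Finite (RibbonTableau n N lam mu) := by
  let P : Finset (Finset (Finset Cell)) := lam.cells.powerset.powerset
  have hmem : ∀ (T : RibbonTableau n N lam mu) (i : Fin N), T.tiling i ∈ P := by
    intro T i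
    refine Finset.mem_powerset.2 fun R hR => Finset.mem_powerset.2 fun x hx => ?_
    have : x ∈ (T.tiling i).biUnion id := Finset.mem_biUnion.2 ⟨R, hR, hx⟩
    rw [(T.tiling_strip i).1.2.2] at this
    exact YoungDiagram.cells_subset_iff.2 (chain_le_last T _) (Finset.mem_sdiff.1 this).1
  refine Finite.of_injective
    (fun (T : RibbonTableau n N lam mu) (i : Fin N) => (⟨T.tiling i, hmem T i⟩ : {x // x ∈ P})) ?_
  intro S T h
  apply tableau_ext
  funext i
  exact congrArg Subtype.val (congrFun h i)

/-- The weight of a ribbon tableau, as an exponent vector. -/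
noncomputable def wt {n N : ℕ} {lam mu : YoungDiagram} (T : RibbonTableau n N lam mu) :
    Fin N →₀ ℕ := Finsupp.equivFunOnFinite.symm fun i => (T.tiling i).card

lemma tableauTerm_eq {n N : ℕ} {lam mu : YoungDiagram} (T : RibbonTableau n N lam mu) :
    tableauTerm T = MvPolynomial.monomial (wt T) (Polynomial.X ^ T.spin) := by
  rw [MvPolynomial.monomial_eq, Finsupp.prod_fintype _ _ (fun i => by simp)]
  simp [tableauTerm, wt]

/-- The increasing sequence of ribbon additions underlying the `i`-th strip of a tableau. -/
lemma exists_block {n N : ℕ} (hn : 1 ≤ n) {lam mu : YoungDiagram} (T : RibbonTableau n N lam mu)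
    (i : Fin N) : ∃ L, RPath n (T.chain i.castSucc) (T.chain i.succ) L ∧ HInc L ∧
      L.toFinset = T.tiling i :=
  path_of_hstrip hn _ _ _ (T.chain_mono i) rfl (T.tiling_strip i)

/-- The coefficient of `x^al` in a ribbon function is the spin generating function of the standard
ribbon tableaux which are increasing in blocks of sizes `al`. -/
lemma coeff_ribbonFn {n N : ℕ} (hn : 1 ≤ n) (lam mu : YoungDiagram) (al : Fin N → ℕ) :
    MvPolynomial.coeff (Finsupp.equivFunOnFinite.symm al) (ribbonFn n N lam mu) =
      ∑ L ∈ (paths n hn mu lam).filter (fun L => BlockInc (List.ofFn al) L),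
        (Polynomial.X : Polynomial ℤ) ^ spinL L := by
  have := Fintype.ofFinite (RibbonTableau n N lam mu)
  rw [ribbonFn, finsum_eq_sum_of_fintype, MvPolynomial.coeff_sum]
  simp only [tableauTerm_eq, MvPolynomial.coeff_monomial]
  rw [← Finset.sum_filter]
  choose f hf hinc hset using fun T : RibbonTableau n N lam mu => exists_block hn T
  have hlen : ∀ T i, (f T i).length = (T.tiling i).card := fun T i => by
    rw [← hset T i, List.toFinset_card_of_nodup (hinc T i).nodup]
  have hwt : ∀ T : RibbonTableau n N lam mu, wt T = Finsupp.equivFunOnFinite.symm al ↔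
      ∀ i, (T.tiling i).card = al i := fun T => by
    rw [wt, Equiv.apply_eq_iff_eq, funext_iff]
  refine Finset.sum_bij (fun T _ => (List.ofFn (f T)).flatten) ?_ ?_ ?_ ?_
  · intro T hT
    simp only [Finset.mem_filter, Finset.mem_univ, true_and, hwt] at hT
    rw [Finset.mem_filter, mem_paths]
    constructor
    · have := path_concat T.chain (f T) (hf T)
      rwa [T.chain_zero, T.chain_last] at this
    · have := block_concat (f T) (hinc T)
      simpa only [hlen, hT] using this
  · intro S hS T hT hST
    simp only [Finset.mem_filter, Finset.mem_univ, true_and, hwt] at hS hT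
    have : List.ofFn (f S) = List.ofFn (f T) := by
      rw [List.eq_iff_flatten_eq]
      refine ⟨hST, ?_⟩
      rw [List.map_ofFn, List.map_ofFn]
      congr 1
      funext i
      simp [hlen, hS, hT]
    have hfST := List.ofFn_injective this
    apply tableau_ext
    funext i
    rw [← hset S i, ← hset T i, hfST]
  · intro L hL
    rw [Finset.mem_filter, mem_paths] at hL
    obtain ⟨chain, g, c0, cl, hc, hi, hl, hg⟩ := path_split al hL.1 hL.2
    let T : RibbonTableau n N lam mu :=
      { chain := chain
        chain_zero := c0
        chain_last := cl
        chain_mono := fun i => (hc i).le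
        tiling := fun i => (g i).toFinset
        tiling_strip := fun i => hstrip_of_path hn (hc i) (hi i) }
    have hfg : f T = g := by
      funext i
      exact (hinc T i).eq_of_toFinset_eq (hi i) (hset T i)
    refine ⟨T, ?_, by rw [hfg, hg]⟩
    simp only [Finset.mem_filter, Finset.mem_univ, true_and, hwt]
    intro i
    rw [← hlen, hfg, hl]
  · intro T _
    congr 1
    rw [RibbonTableau.spin, spinL, List.map_flatten, List.sum_flatten, List.map_map, List.map_ofFn,
      List.sum_ofFn]
    refine Finset.sum_congr rfl fun i _ => ?_
    rw [tilingSpin, ← hset T i, List.sum_toFinset _ (hinc T i).nodup]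
    rfl

/-! ### Generating functions with prescribed ascents and descents -/

/-- The spin generating function of the standard ribbon tableaux of shape `lam/mu` having an
ascent at every element of `A` and a descent at every element of `B`. -/
noncomputable def gen (n : ℕ) (hn : 1 ≤ n) (mu lam : YoungDiagram) (A B : Finset ℕ) :
    Polynomial ℤ :=
  ∑ L ∈ (paths n hn mu lam).filter (fun L => (∀ i ∈ A, Asc L i) ∧ ∀ i ∈ B, ¬ Asc L i),
    (Polynomial.X : Polynomial ℤ) ^ spinL L

lemma gen_split (n : ℕ) (hn : 1 ≤ n) (mu lam : YoungDiagram) (A B : Finset ℕ) (i : ℕ) :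
    gen n hn mu lam A B = gen n hn mu lam (insert i A) B + gen n hn mu lam A (insert i B) := by
  unfold gen
  rw [← Finset.sum_filter_add_sum_filter_not _ (fun L => Asc L i), Finset.filter_filter,
    Finset.filter_filter]
  congr 1 <;> refine Finset.sum_congr (Finset.filter_congr fun L _ => ?_) fun _ _ => rfl
  · simp only [Finset.forall_mem_insert]
    tauto
  · simp only [Finset.forall_mem_insert]
    tauto

/-- Prescribing ascents amounts to taking a suitable coefficient, uniformly in the shape. -/
lemma exists_coeff_eq_gen {m N : ℕ} (hN : m ≤ N) (A : Finset ℕ) (hA : ∀ i ∈ A, i + 1 < m) :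
    ∃ al : Fin N → ℕ, ∀ (n : ℕ) (hn : 1 ≤ n) (mu lam : YoungDiagram),
      lam.card = mu.card + n * m →
      MvPolynomial.coeff (Finsupp.equivFunOnFinite.symm al) (ribbonFn n N lam mu) =
        gen n hn mu lam A ∅ := by
  obtain ⟨al, h1, -, -, h4⟩ := exists_weight m N (A : Set ℕ) hN
  subst h1
  refine ⟨fun i => al[i], fun n hn mu lam hcard => ?_⟩
  rw [coeff_ribbonFn hn, gen]
  refine Finset.sum_congr (Finset.filter_congr fun L hL => ?_) fun _ _ => rfl
  rw [mem_paths] at hL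
  have hof : List.ofFn (fun i : Fin al.length => al[i]) = al := by simp
  rw [hof, h4 L (hL.length_eq hn hcard)]
  simp only [Finset.mem_coe, Finset.notMem_empty, false_imp_iff, implies_true, and_true]
  exact ⟨fun h i hi => h i hi (hA i hi), fun h i hi _ => h i hi⟩

lemma diagrams_finite (m : ℕ) : {nu : YoungDiagram | nu.card = m}.Finite := by
  refine Set.Finite.of_finite_image (f := YoungDiagram.cells) ?_ ?_
  · refine (Finset.finite_toSet (Finset.range m ×ˢ Finset.range m).powerset).subset ?_
    rintro _ ⟨nu, hnu, rfl⟩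
    simp only [Finset.mem_coe, Finset.mem_powerset]
    rintro ⟨a, b⟩ hab
    have hnu : nu.cells.card = m := hnu
    rw [YoungDiagram.mem_cells] at hab
    rw [Finset.mem_product, Finset.mem_range, Finset.mem_range]
    constructor
    · have : (Finset.range (a + 1)).image (fun i => (i, b)) ⊆ nu.cells := by
        intro x hx
        obtain ⟨i, hi, rfl⟩ := Finset.mem_image.1 hx
        rw [Finset.mem_range] at hi
        exact nu.up_left_mem (by omega) le_rfl hab
      have := Finset.card_le_card this
      rw [Finset.card_image_of_injective _ (fun i j h => (Prod.mk.inj h).1), Finset.card_range]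
        at this
      omega
    · have : (Finset.range (b + 1)).image (fun j => (a, j)) ⊆ nu.cells := by
        intro x hx
        obtain ⟨i, hi, rfl⟩ := Finset.mem_image.1 hx
        rw [Finset.mem_range] at hi
        exact nu.up_left_mem le_rfl (by omega) hab
      have := Finset.card_le_card this
      rw [Finset.card_image_of_injective _ (fun i j h => (Prod.mk.inj h).2), Finset.card_range]
        at this
      omega
  · intro a _ b _ h
    exact YoungDiagram.ext h

/-- The finite set of partitions of `m`. -/
noncomputable def diagrams (m : ℕ) : Finset YoungDiagram := (diagrams_finite m).toFinset

lemma mem_diagrams {m : ℕ} {nu : YoungDiagram} : nu ∈ diagrams m ↔ nu.card = m := by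
  simp [diagrams]

lemma bot_card : (⊥ : YoungDiagram).card = 0 := rfl

/-- The Schur expansion of a ribbon function, refined to prescribed ascents and descents. The
passage from ascents only to ascents and descents is inclusion-exclusion. -/
lemma gen_expansion {n N m : ℕ} (hn : 1 ≤ n) (hN : m ≤ N) {mu lam : YoungDiagram}
    (hm : lam.card = mu.card + n * m) {c : YoungDiagram → Polynomial ℤ}
    (hc : ribbonFn n N lam mu = ∑ᶠ nu ∈ {nu : YoungDiagram | nu.card = m},
        MvPolynomial.C (c nu) * schurPoly N nu) (B : Finset ℕ) :
    (∀ i ∈ B, i + 1 < m) → ∀ A : Finset ℕ, (∀ i ∈ A, i + 1 < m) →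
      gen n hn mu lam A B = ∑ nu ∈ diagrams m, c nu * gen 1 le_rfl ⊥ nu A B := by
  induction B using Finset.induction_on with
  | empty =>
    intro _ A hA
    obtain ⟨al, hal⟩ := exists_coeff_eq_gen hN A hA
    rw [← hal n hn mu lam hm, hc, finsum_mem_eq_finite_toFinset_sum _ (diagrams_finite m),
      MvPolynomial.coeff_sum]
    refine Finset.sum_congr rfl fun nu hnu => ?_
    have hnu : nu.card = m := mem_diagrams.1 hnu
    rw [MvPolynomial.coeff_C_mul, schurPoly,
      hal 1 le_rfl ⊥ nu (by rw [hnu, bot_card]; omega)]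
  | insert i B hi ih =>
    intro hB A hA
    have hB' : ∀ j ∈ B, j + 1 < m := fun j hj => hB j (Finset.mem_insert_of_mem hj)
    have hi' : i + 1 < m := hB i (Finset.mem_insert_self _ _)
    have h1 := ih hB' A hA
    have h2 := ih hB' (insert i A) (by
      intro j hj
      rcases Finset.mem_insert.1 hj with rfl | hj
      · exact hi'
      · exact hA j hj)
    have h3 := gen_split n hn mu lam A B i
    have h4 : ∑ nu ∈ diagrams m, c nu * gen 1 le_rfl ⊥ nu A B =
        ∑ nu ∈ diagrams m, c nu * gen 1 le_rfl ⊥ nu (insert i A) B +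
          ∑ nu ∈ diagrams m, c nu * gen 1 le_rfl ⊥ nu A (insert i B) := by
      rw [← Finset.sum_add_distrib]
      refine Finset.sum_congr rfl fun nu _ => ?_
      rw [gen_split 1 le_rfl ⊥ nu A B i, mul_add]
    linear_combination h1 - h2 - h3 + h4

/-! ### Transposition exchanges ascents and descents -/

lemma RPath.swap {n : ℕ} {mu lam : YoungDiagram} {L : List (Finset Cell)}
    (h : RPath n mu lam L) : RPath n mu.transpose lam.transpose (L.map swapCells) := by
  induction L generalizing mu with
  | nil =>
    have h : mu = lam := h
    simp [RPath, h]
  | cons R L ih =>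
    obtain ⟨k, h1, h2, h3, h4⟩ := h
    exact ⟨k.transpose, YoungDiagram.transpose_mono h1, by rw [swapCells_sdiff, h2],
      ribbon_swap h3, ih h4⟩

/-- Transposing turns ascents into descents; the converse direction needs that successive heads are
distinct. -/
lemma asc_swap {n : ℕ} (hn : 1 ≤ n) {mu lam : YoungDiagram} {L : List (Finset Cell)}
    (h : RPath n mu lam L) {i : ℕ} (hi : i + 1 < L.length) :
    Asc (L.map swapCells) i ↔ ¬ Asc L i := by
  induction L generalizing mu i with
  | nil => simp at hi
  | cons R L ih =>
    obtain ⟨k, h1, h2, h3, h4⟩ := h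
    cases i with
    | succ i =>
      have := ih h4 (i := i) (by simpa using hi)
      simpa [Asc] using this
    | zero =>
      match L, hi, h4 with
      | S :: L, _, ⟨k', h1', h2', h3', _⟩ =>
        subst h2 h2'
        have hne := hd_ne hn h3 h3'
        simp only [Asc, List.map_cons, List.getD_cons_zero, List.getD_cons_succ]
        rw [hd_swap hn h3, hd_swap hn h3']
        omega

lemma spinL_swap {n : ℕ} (hn : 1 ≤ n) {L : List (Finset Cell)} (h : ∀ R ∈ L, IsRibbon n R) :
    spinL (L.map swapCells) + spinL L = (n - 1) * L.length := by
  induction L with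
  | nil => simp [spinL]
  | cons R L ih =>
    have h1 := ih fun S hS => h S (List.mem_cons_of_mem _ hS)
    have h2 := ribbonSpin_swap hn (h R List.mem_cons_self)
    simp only [spinL, List.map_cons, List.sum_cons, List.length_cons, mul_add, mul_one] at h1 ⊢
    omega

lemma map_swapCells_involutive : Function.Involutive (List.map swapCells) := by
  intro L
  rw [List.map_map]
  have : swapCells ∘ swapCells = id := funext swapCells_swapCells
  simp [this]

/-- Prescribed ascents in the transposed shape correspond to prescribed descents in the original
one, the spins being complementary. -/
lemma gen_transpose {n : ℕ} (hn : 1 ≤ n) {mu lam : YoungDiagram} {m : ℕ}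
    (hm : lam.card = mu.card + n * m) (B : Finset ℕ) (hB : ∀ i ∈ B, i + 1 < m) :
    Polynomial.toLaurent (gen n hn mu.transpose lam.transpose B ∅) =
      LaurentPolynomial.T (((n : ℤ) - 1) * (m : ℤ)) *
        Polynomial.aeval (R := ℤ) (LaurentPolynomial.T (-1) : LaurentPolynomial ℤ)
          (gen n hn mu lam ∅ B) := by
  unfold gen
  rw [map_sum, map_sum, Finset.mul_sum]
  symm
  refine Finset.sum_bij (fun L _ => L.map swapCells) ?_ ?_ ?_ ?_
  · intro L hL
    simp only [Finset.mem_filter, mem_paths] at hL ⊢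
    refine ⟨hL.1.swap, fun i hi => ?_, by simp⟩
    rw [asc_swap hn hL.1 (by rw [hL.1.length_eq hn hm]; exact hB i hi)]
    exact hL.2.2 i hi
  · intro L _ M _ h
    exact map_swapCells_involutive.injective h
  · intro L hL
    simp only [Finset.mem_filter, mem_paths] at hL
    have hp := hL.1.swap
    rw [YoungDiagram.transpose_transpose, YoungDiagram.transpose_transpose] at hp
    refine ⟨L.map swapCells, ?_, map_swapCells_involutive L⟩
    simp only [Finset.mem_filter, mem_paths]
    refine ⟨hp, by simp, fun i hi => ?_⟩
    rw [← asc_swap hn hp (by rw [hp.length_eq hn hm]; exact hB i hi),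
      map_swapCells_involutive L]
    exact hL.2.1 i hi
  · intro L hL
    simp only [Finset.mem_filter, mem_paths] at hL
    have hs := spinL_swap hn hL.1.ribbon
    rw [hL.1.length_eq hn hm] at hs
    rw [map_pow, Polynomial.aeval_X, Polynomial.toLaurent_X_pow, LaurentPolynomial.T_pow,
      ← LaurentPolynomial.T_add]
    congr 1
    have : ((spinL (L.map swapCells) + spinL L : ℕ) : ℤ) = ((n : ℤ) - 1) * m := by
      rw [hs]
      push_cast [Nat.cast_sub hn]
      ring
    push_cast at this
    linarith

/-! ### Linear independence of the Schur coefficients -/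

/-- The sum of the row indices of the cells of `S`; the row index of the cell if `S` is a
singleton. -/
def rowSum (S : Finset Cell) : ℕ := ∑ x ∈ S, x.1

lemma hd_singleton (x : Cell) : hd {x} = content x := by
  simp [hd]

lemma RPath.sum_cells {n : ℕ} {mu lam : YoungDiagram} {L : List (Finset Cell)}
    (h : RPath n mu lam L) (f : Cell → ℕ) :
    (L.map fun R => ∑ x ∈ R, f x).sum = ∑ x ∈ lam.cells \ mu.cells, f x := by
  induction L generalizing mu with
  | nil =>
    have h : mu = lam := h
    simp [h]
  | cons R L ih =>
    obtain ⟨k, h1, h2, h3, h4⟩ := h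
    have hk := YoungDiagram.cells_subset_iff.2 h1
    have hl := YoungDiagram.cells_subset_iff.2 h4.le
    have e1 : ∑ x ∈ k.cells \ mu.cells, f x + ∑ x ∈ mu.cells, f x = ∑ x ∈ k.cells, f x := by
      convert Finset.sum_sdiff (f := f) hk
    have e2 : ∑ x ∈ lam.cells \ k.cells, f x + ∑ x ∈ k.cells, f x = ∑ x ∈ lam.cells, f x := by
      convert Finset.sum_sdiff (f := f) hl
    have e3 : ∑ x ∈ lam.cells \ mu.cells, f x + ∑ x ∈ mu.cells, f x = ∑ x ∈ lam.cells, f x := by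
      convert Finset.sum_sdiff (f := f) (hk.trans hl)
    have e4 : ∑ x ∈ k.cells \ mu.cells, f x + ∑ x ∈ lam.cells \ k.cells, f x =
        ∑ x ∈ lam.cells \ mu.cells, f x := by omega
    rw [List.map_cons, List.sum_cons, ih h4, ← h2]
    convert e4

/-- Row-by-row reading gives a standard tableau of every partition shape. -/
lemma exists_reading (c : ℕ) : ∀ nu : YoungDiagram, nu.card = c → ∃ L, RPath 1 ⊥ nu L ∧
    L.Pairwise fun R S => rowSum R ≤ rowSum S ∧ (rowSum R = rowSum S → hd R < hd S) := by
  induction c with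
  | zero =>
    intro nu hnu
    refine ⟨[], ?_, List.Pairwise.nil⟩
    exact YoungDiagram.ext (Finset.card_eq_zero.1 hnu).symm
  | succ c ih =>
    intro nu hnu
    have hne : nu.cells.Nonempty := Finset.card_pos.1 (by
      have : nu.cells.card = c + 1 := hnu
      omega)
    obtain ⟨x0, hx0, hrow⟩ := nu.cells.exists_max_image Prod.fst hne
    obtain ⟨x, hx, hcol⟩ := (nu.row x0.1).exists_max_image Prod.snd
      ⟨x0, YoungDiagram.mem_row_iff.2 ⟨hx0, rfl⟩⟩
    rw [YoungDiagram.mem_row_iff] at hx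
    have hrow' : ∀ y ∈ nu, y.1 ≤ x.1 := fun y hy => by
      rw [hx.2]
      exact hrow y hy
    have hcol' : ∀ y ∈ nu, y.1 = x.1 → y.2 ≤ x.2 := fun y hy h =>
      hcol y (YoungDiagram.mem_row_iff.2 ⟨hy, by rw [h, hx.2]⟩)
    -- `x` is the last cell of the last row
    let kap : YoungDiagram := ⟨nu.cells.erase x, by
      intro a b hba ha
      simp only [Finset.coe_erase, Set.mem_sdiff, Finset.mem_coe, Set.mem_singleton_iff] at ha ⊢
      refine ⟨nu.isLowerSet hba ha.1, ?_⟩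
      rintro rfl
      have h1 := hrow' a ha.1
      have h2 : a.1 = b.1 := le_antisymm h1 hba.1
      have h3 := hcol' a ha.1 h2
      exact ha.2 (Prod.ext h2 (le_antisymm h3 hba.2))⟩
    have hkap : ∀ y, y ∈ kap ↔ y ≠ x ∧ y ∈ nu := fun y => by
      rw [← YoungDiagram.mem_cells]
      simp [kap]
    have hle : kap ≤ nu := fun y hy => ((hkap y).1 hy).2
    have hdiff : nu.cells \ kap.cells = {x} := by
      ext y
      simp only [Finset.mem_sdiff, YoungDiagram.mem_cells, hkap, Finset.mem_singleton]
      constructor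
      · rintro ⟨h1, h2⟩
        by_contra h
        exact h2 ⟨h, h1⟩
      · rintro rfl
        exact ⟨hx.1, fun h => h.1 rfl⟩
    have hcard : kap.card = c := by
      have : (nu.cells.erase x).card = nu.cells.card - 1 :=
        Finset.card_erase_of_mem ((YoungDiagram.mem_cells _).2 hx.1)
      have h' : nu.cells.card = c + 1 := hnu
      have h'' : kap.card = (nu.cells.erase x).card := rfl
      omega
    obtain ⟨L, hL, hpw⟩ := ih kap hcard
    have hrib : IsRibbon 1 ({x} : Finset Cell) := by
      refine ⟨by simp, ?_, ?_, ?_⟩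
      · intro a ha b hb
        rw [Finset.mem_singleton] at ha hb
        rw [ha, hb]
        exact Relation.ReflTransGen.refl
      · rintro ⟨i, j, h1, h2, -, -⟩
        rw [Finset.mem_singleton] at h1 h2
        rw [← h1] at h2
        simp at h2
      · rw [← hdiff]
        exact isSkew_sdiff hle
    refine ⟨L ++ [{x}], RPath.append_iff.2 ⟨kap, hL, nu, hle, hdiff, hrib, rfl⟩, ?_⟩
    refine List.pairwise_append.2 ⟨hpw, by simp, fun S hS S' hS' => ?_⟩
    obtain rfl : S' = {x} := by simpa using hS'
    obtain ⟨y, rfl⟩ := Finset.card_eq_one.1 (hL.ribbon S hS).1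
    have hy := (hL.mem_sdiff_iff y).2 ⟨_, hS, Finset.mem_singleton_self y⟩
    have hy : y ≠ x ∧ y ∈ nu := (hkap y).1 (by simpa using hy)
    simp only [rowSum, Finset.sum_singleton, hd_singleton]
    refine ⟨hrow' y hy.2, fun h => ?_⟩
    have h1 := hcol' y hy.2 h
    have h2 : y.2 ≠ x.2 := fun h' => hy.1 (Prod.ext h h')
    unfold content
    omega

/-- If the standard tableau `L` increases along the level sets of a weakly increasing function
`r`, then its `t`-th cell lies in row at most `r t`: within a level set, two cells cannot lie in
the same column. -/
lemma row_le {kap : YoungDiagram} {L : List (Finset Cell)} (hL : RPath 1 ⊥ kap L) (r : ℕ → ℕ)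
    (hmono : ∀ i, i + 1 < L.length → r i ≤ r (i + 1))
    (hasc : ∀ i, i + 1 < L.length → r i = r (i + 1) → Asc L i) (t : ℕ) :
    t < L.length → rowSum (L.getD t ∅) ≤ r t := by
  have hchain : ∀ s t, s < t → t < L.length →
      r s ≤ r t ∧ (r s = r t → hd (L.getD s ∅) < hd (L.getD t ∅)) := by
    intro s t hst
    induction t, hst using Nat.le_induction with
    | base => exact fun h => ⟨hmono s h, hasc s h⟩
    | succ t hst ih =>
      intro h
      have h1 := ih (by omega)
      have h2 := hmono t h
      refine ⟨h1.1.trans h2, fun he => ?_⟩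
      exact (h1.2 (by omega)).trans (hasc t h (by omega))
  induction t using Nat.strong_induction_on with
  | _ t ih =>
    intro ht
    have hget : L.getD t ∅ = L[t] := List.getD_eq_getElem _ _ ht
    obtain ⟨⟨a, b⟩, hx⟩ := Finset.card_eq_one.1 (hL.ribbon L[t] (List.getElem_mem ht)).1
    rw [hget, hx]
    simp only [rowSum, Finset.sum_singleton]
    rcases Nat.eq_zero_or_pos a with ha | ha
    · omega
    have hsplit : L = L.take t ++ L[t] :: L.drop (t + 1) := by simp
    have hp := hL
    rw [hsplit, RPath.append_iff] at hp
    obtain ⟨k1, p1, k2, hk, hkR, -, -⟩ := hp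
    rw [hx] at hkR
    have hmem : ∀ y, y ∈ k2 ∧ y ∉ k1 ↔ y = (a, b) := fun y => by
      have := Finset.ext_iff.1 hkR y
      simpa using this
    have hab := (hmem (a, b)).2 rfl
    have hup : (a - 1, b) ∈ k2 := k2.up_left_mem (by omega) le_rfl hab.1
    have hup1 : (a - 1, b) ∈ k1 := by
      by_contra h
      have := (hmem _).1 ⟨hup, h⟩
      simp only [Prod.mk.injEq, and_true] at this
      omega
    obtain ⟨R, hR, hyR⟩ := (p1.mem_sdiff_iff (a - 1, b)).1 (by simpa using hup1)
    obtain ⟨s, hs, hsR⟩ := List.getElem_of_mem hR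
    rw [List.length_take] at hs
    have hst : s < t := by omega
    rw [List.getElem_take] at hsR
    obtain ⟨y, hy⟩ := Finset.card_eq_one.1 (p1.ribbon R hR).1
    rw [hy, Finset.mem_singleton] at hyR
    subst hyR
    have hgets : L.getD s ∅ = {(a - 1, b)} := by
      rw [List.getD_eq_getElem _ _ (hst.trans ht), hsR, hy]
    have h1 := ih s hst (hst.trans ht)
    have h2 := hchain s t hst ht
    rw [hgets] at h1 h2
    rw [hget, hx, hd_singleton, hd_singleton] at h2
    simp only [rowSum, Finset.sum_singleton] at h1
    have h3 : r s ≠ r t := by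
      intro he
      have := h2.2 he
      simp only [content] at this
      omega
    omega

lemma eq_of_forall_le {a b : List ℕ} (h : List.Forall₂ (· ≤ ·) a b) (hs : b.sum ≤ a.sum) :
    a = b := by
  induction h with
  | nil => rfl
  | cons hxy hl ih =>
    have := hl.sum_le_sum
    simp only [List.sum_cons] at hs
    rw [ih (by omega)]
    congr 1
    omega

lemma RPath.rowLen_eq {nu : YoungDiagram} {L : List (Finset Cell)} (h : RPath 1 ⊥ nu L) (i : ℕ) :
    nu.rowLen i = ((L.map rowSum).map fun r => if r = i then 1 else 0).sum := by
  have h1 := h.sum_cells fun x => if x.1 = i then 1 else 0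
  rw [YoungDiagram.rowLen_eq_card, YoungDiagram.row, Finset.card_filter]
  rw [YoungDiagram.cells_bot, Finset.sdiff_empty] at h1
  rw [← h1, List.map_map]
  congr 1
  refine List.map_congr_left fun R hR => ?_
  obtain ⟨x, rfl⟩ := Finset.card_eq_one.1 (h.ribbon R hR).1
  by_cases hx : x.1 = i <;> simp [rowSum, Finset.filter_singleton, hx]

lemma gen_one_eq (nu : YoungDiagram) (A B : Finset ℕ) :
    gen 1 le_rfl ⊥ nu A B = (((paths 1 le_rfl ⊥ nu).filter
      (fun L => (∀ i ∈ A, Asc L i) ∧ ∀ i ∈ B, ¬ Asc L i)).card : Polynomial ℤ) := by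
  unfold gen
  rw [Finset.card_eq_sum_ones, Nat.cast_sum]
  refine Finset.sum_congr rfl fun L hL => ?_
  rw [Finset.mem_filter, mem_paths] at hL
  have := spinL_swap le_rfl hL.1.ribbon
  have h0 : spinL L = 0 := by simpa using (Nat.eq_zero_of_add_eq_zero (by simpa using this)).2
  simp [h0]

/-- For every partition `nu` there is a set of prescribed ascents realised by some tableau of
shape `nu`, but by none of a different shape whose row indices have at least the same sum. -/
lemma exists_detecting {m : ℕ} {nu : YoungDiagram} (hnu : nu.card = m) :
    ∃ A : Finset ℕ, (∀ i ∈ A, i + 1 < m) ∧ gen 1 le_rfl ⊥ nu A ∅ ≠ 0 ∧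
      ∀ kap : YoungDiagram, kap.card = m → kap ≠ nu → rowSum nu.cells ≤ rowSum kap.cells →
        gen 1 le_rfl ⊥ kap A ∅ = 0 := by
  obtain ⟨L0, hL0, hpw⟩ := exists_reading nu.card nu rfl
  have hlen : ∀ {kap L}, kap.card = m → RPath 1 ⊥ kap L → L.length = m := fun hk h =>
    h.length_eq le_rfl (by rw [hk, bot_card]; omega)
  have hlen0 := hlen hnu hL0
  let r : ℕ → ℕ := fun t => rowSum (L0.getD t ∅)
  have hpw' : ∀ i, i + 1 < m → r i ≤ r (i + 1) ∧ (r i = r (i + 1) → Asc L0 i) := by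
    intro i hi
    have := List.pairwise_iff_getElem.1 hpw i (i + 1) (by omega) (by omega) (by omega)
    simp only [r, Asc]
    rw [List.getD_eq_getElem _ _ (by omega), List.getD_eq_getElem _ _ (by omega)]
    exact this
  let A : Finset ℕ := (Finset.range m).filter fun i => i + 1 < m ∧ r i = r (i + 1)
  have hA : ∀ i, i ∈ A ↔ i + 1 < m ∧ r i = r (i + 1) := fun i => by
    simp only [A, Finset.mem_filter, Finset.mem_range]
    constructor
    · exact fun h => h.2
    · exact fun h => ⟨by omega, h⟩
  refine ⟨A, fun i hi => ((hA i).1 hi).1, ?_, ?_⟩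
  · rw [gen_one_eq, Nat.cast_ne_zero, Finset.card_ne_zero]
    refine ⟨L0, ?_⟩
    rw [Finset.mem_filter, mem_paths]
    exact ⟨hL0, fun i hi => (hpw' i ((hA i).1 hi).1).2 ((hA i).1 hi).2, by simp⟩
  · intro kap hkap hne hsum
    rw [gen_one_eq, Nat.cast_eq_zero, Finset.card_eq_zero, Finset.filter_eq_empty_iff]
    rintro L hL ⟨hasc, -⟩
    rw [mem_paths] at hL
    have hlenL := hlen hkap hL
    have hrow := row_le hL r (fun i hi => (hpw' i (by omega)).1)
      (fun i hi h => hasc i ((hA i).2 ⟨by omega, h⟩))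
    have hsumL := hL.sum_cells fun x => x.1
    have hsum0 := hL0.sum_cells fun x => x.1
    rw [YoungDiagram.cells_bot, Finset.sdiff_empty] at hsumL hsum0
    have heq : L.map rowSum = L0.map rowSum := by
      refine eq_of_forall_le ?_ ?_
      · rw [List.forall₂_iff_get]
        refine ⟨by simp [hlenL, hlen0], fun i h1 h2 => ?_⟩
        rw [List.length_map] at h1 h2
        have := hrow i h1
        simp only [r] at this
        rw [List.getD_eq_getElem _ _ h1, List.getD_eq_getElem _ _ h2] at this
        simpa using this
      · have e1 : (L.map rowSum).sum = rowSum kap.cells := hsumL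
        have e2 : (L0.map rowSum).sum = rowSum nu.cells := hsum0
        omega
    apply hne
    apply YoungDiagram.ext
    ext ⟨i, j⟩
    rw [YoungDiagram.mem_cells, YoungDiagram.mem_cells, YoungDiagram.mem_iff_lt_rowLen,
      YoungDiagram.mem_iff_lt_rowLen, hL.rowLen_eq, hL0.rowLen_eq, heq]

/-- The ascent-counting functions of the partitions of `m` are linearly independent. -/
lemma coeffs_eq_zero {m : ℕ} (e : YoungDiagram → LaurentPolynomial ℤ)
    (h : ∀ A : Finset ℕ, (∀ i ∈ A, i + 1 < m) →
      ∑ kap ∈ diagrams m, e kap * Polynomial.toLaurent (gen 1 le_rfl ⊥ kap A ∅) = 0)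
    {nu : YoungDiagram} (hnu : nu.card = m) : e nu = 0 := by
  by_contra hne
  -- a counterexample with the smallest sum of row indices
  obtain ⟨kap, hkap, hmin⟩ := ((diagrams m).filter fun k => e k ≠ 0).exists_min_image
    (fun k => rowSum k.cells) ⟨nu, by simp [mem_diagrams, hnu, hne]⟩
  rw [Finset.mem_filter, mem_diagrams] at hkap
  obtain ⟨A, hA, hA0, hA1⟩ := exists_detecting hkap.1
  have hs := h A hA
  rw [Finset.sum_eq_single kap] at hs
  · rcases mul_eq_zero.1 hs with h1 | h1
    · exact hkap.2 h1
    · exact hA0 ((Polynomial.toLaurent_inj _ _).1 (by rw [h1, map_zero]))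
  · intro k hk hkne
    rw [mem_diagrams] at hk
    by_cases he : e k = 0
    · rw [he, zero_mul]
    · rw [hA1 k hk hkne (hmin k (by simp [mem_diagrams, hk, he])), map_zero, mul_zero]
  · intro hk
    exact absurd (mem_diagrams.2 hkap.1) hk

lemma transpose_bot : (⊥ : YoungDiagram).transpose = ⊥ := by
  apply YoungDiagram.ext
  ext x
  simp [YoungDiagram.mem_transpose]

lemma transpose_card (nu : YoungDiagram) : nu.transpose.card = nu.card := by
  have h := swapCells_sdiff nu ⊥
  rw [transpose_bot, YoungDiagram.cells_bot, Finset.sdiff_empty, Finset.sdiff_empty] at h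
  change nu.transpose.cells.card = nu.cells.card
  rw [h, swapCells_card]

end QLR

/-- conjugation symmetry of the q-Littlewood–Richardson coefficients:
`c^{ν'}_{λ'/μ'}(q) = q^{(n-1)m} c^ν_{λ/μ}(q⁻¹)` in `ℤ[q,q⁻¹]`.  The coefficient families
`c`, `c'` are pinned down by the Schur expansions of `𝒢_{λ/μ}` and `𝒢_{λ'/μ'}`
in `N ≥ m` variables. -/
theorem qLR_conjugation (n : ℕ) (hn : 1 ≤ n) (lam mu : YoungDiagram) (hsub : mu ≤ lam)
    (htile : Tileable n (lam.cells \ mu.cells))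
    (m : ℕ) (hm : lam.card = mu.card + n * m)
    (N : ℕ) (hN : m ≤ N) (hN1 : 1 ≤ N)
    (c c' : YoungDiagram → Polynomial ℤ)
    (hc : ribbonFn n N lam mu =
      ∑ᶠ nu ∈ {nu : YoungDiagram | nu.card = m},
        MvPolynomial.C (c nu) * schurPoly N nu)
    (hc' : ribbonFn n N lam.transpose mu.transpose =
      ∑ᶠ nu ∈ {nu : YoungDiagram | nu.card = m},
        MvPolynomial.C (c' nu) * schurPoly N nu)
    (nu : YoungDiagram) (hnu : nu.card = m) :
    Polynomial.toLaurent (c' nu.transpose) =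
      LaurentPolynomial.T (((n : ℤ) - 1) * (m : ℤ)) *
        Polynomial.aeval (R := ℤ) (LaurentPolynomial.T (-1)) (c nu) := by
  -- the coefficients expected for the transposed shape
  let d : YoungDiagram → LaurentPolynomial ℤ := fun kap =>
    LaurentPolynomial.T (((n : ℤ) - 1) * (m : ℤ)) *
      Polynomial.aeval (R := ℤ) (LaurentPolynomial.T (-1) : LaurentPolynomial ℤ) (c kap.transpose)
  have hzero : Polynomial.toLaurent (c' nu.transpose) - d nu.transpose = 0 := by
    refine QLR.coeffs_eq_zero (m := m)
      (fun kap => Polynomial.toLaurent (c' kap) - d kap) (fun A hA => ?_)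
      (by rw [QLR.transpose_card, hnu])
    have h1 := QLR.gen_expansion hn hN
      (by rw [QLR.transpose_card, QLR.transpose_card, hm]) hc' ∅ (by simp) A hA
    have h2 := QLR.gen_expansion hn hN hm hc A hA ∅ (by simp)
    have h3 := QLR.gen_transpose hn hm A hA
    rw [h1, h2, map_sum, map_sum, Finset.mul_sum] at h3
    simp only [sub_mul]
    rw [Finset.sum_sub_distrib, sub_eq_zero]
    simp only [map_mul] at h3
    rw [h3]
    refine Finset.sum_bij (fun kap _ => kap.transpose) ?_ ?_ ?_ ?_
    · intro kap hk
      rw [QLR.mem_diagrams] at hk ⊢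
      rw [QLR.transpose_card, hk]
    · intro k _ k' _ h
      exact YoungDiagram.transpose_eq_iff.1 h
    · intro k hk
      rw [QLR.mem_diagrams] at hk
      exact ⟨k.transpose, QLR.mem_diagrams.2 (by rw [QLR.transpose_card, hk]),
        YoungDiagram.transpose_transpose k⟩
    · intro k hk
      rw [QLR.mem_diagrams] at hk
      -- the case of one-cell ribbons: transposition of standard Young tableaux
      have h4 := QLR.gen_transpose (n := 1) le_rfl (mu := ⊥) (lam := k) (m := m)
        (by rw [hk, QLR.bot_card]; omega) A hA
      rw [QLR.transpose_bot] at h4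
      rw [h4]
      simp only [d, YoungDiagram.transpose_transpose, Nat.cast_one, sub_self, zero_mul,
        LaurentPolynomial.T_zero, one_mul]
      ring
  rw [sub_eq_zero] at hzero
  simpa only [d, YoungDiagram.transpose_transpose] using hzero
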